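/- arXiv:2406.17387 — 2 statements merged into one kernel-verified Lean document; each statement's English description precedes it below -/
import Mathlib

section
/- Let x, y be nonzero points of the unit ball 𝔹ⁿ, let μ ∈ [0, π] be the angle between the vectors x and y, and suppose cos(μ) ≥ (| |x|² − |y|² | + 2·min{|x|, |y|}) / (2·max{|x|, |y|}). Then c̃_{𝔹ⁿ}(x,y) = |x−y| / (1 − min{|x|, |y|}). -/
open Metric Set

/-- The new hyperbolic type metric on the unit ball `𝔹ⁿ` (dimension `n + 2 ≥ 2`):
`c̃_{𝔹ⁿ}(x,y) = |x−y| / inf_{z∈S^{n−1}} max{|x−z|, |y−z|}`. -/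
noncomputable def ctildeB {n : ℕ} (x y : EuclideanSpace ℝ (Fin (n + 2))) : ℝ :=
  dist x y /
    sInf ((fun z => max (dist x z) (dist y z)) '' sphere (0 : EuclideanSpace ℝ (Fin (n + 2))) 1)

/-! When `‖x‖ ≤ ‖y‖`, no point of the sphere of radius `r` about the origin is closer to `x` than
its radial projection `p = (r / ‖x‖) • x`, at distance `r - ‖x‖`. By the law of cosines, the
hypothesis on the angle says precisely that `y` also lies within distance `r - ‖x‖` of `p`, so `p`
minimises the maximum of the two distances. -/

open NormedSpace InnerProductGeometry

lemma sub_norm_le_dist_of_mem_sphere {E : Type*} [SeminormedAddCommGroup E] {x z : E} {r : ℝ}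
    (hz : z ∈ sphere (0 : E) r) : r - ‖x‖ ≤ dist x z := by
  rw [← mem_sphere_zero_iff_norm.mp hz, dist_eq_norm']
  exact norm_sub_norm_le z x

section NormedSpace

variable {E : Type*} [NormedAddCommGroup E] [NormedSpace ℝ E] {x y : E}

lemma norm_smul_normalize_eq_abs (hx : x ≠ 0) (r : ℝ) : ‖r • normalize x‖ = |r| := by
  rw [norm_smul, norm_normalize hx, mul_one, Real.norm_eq_abs]

lemma dist_smul_normalize_self (hx : x ≠ 0) (r : ℝ) : dist x (r • normalize x) = |‖x‖ - r| :=
  calc dist x (r • normalize x)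
    _ = ‖(‖x‖ - r) • normalize x‖ := by rw [sub_smul, norm_smul_normalize, dist_eq_norm]
    _ = |‖x‖ - r| := norm_smul_normalize_eq_abs hx _

lemma isLeast_max_dist_image_sphere {r : ℝ} (hx : x ≠ 0) (hxr : ‖x‖ ≤ r)
    (hy : dist y (r • normalize x) ≤ r - ‖x‖) :
    IsLeast ((fun z => max (dist x z) (dist y z)) '' sphere (0 : E) r) (r - ‖x‖) := by
  constructor
  · have hmem : r • normalize x ∈ sphere (0 : E) r := by
      rw [mem_sphere_zero_iff_norm, norm_smul_normalize_eq_abs hx,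
        abs_of_nonneg ((norm_nonneg x).trans hxr)]
    have hdist : dist x (r • normalize x) = r - ‖x‖ := by
      rw [dist_smul_normalize_self hx, abs_sub_comm, abs_of_nonneg (sub_nonneg.2 hxr)]
    refine ⟨r • normalize x, hmem, ?_⟩
    simp only [hdist, max_eq_left hy]
  · rintro _ ⟨z, hz, rfl⟩
    exact (sub_norm_le_dist_of_mem_sphere hz).trans (le_max_left _ _)

end NormedSpace

section InnerProductSpace

variable {V : Type*} [NormedAddCommGroup V] [InnerProductSpace ℝ V] {x y : V} {r : ℝ}

lemma inner_smul_normalize (hx : x ≠ 0) (r : ℝ) :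
    inner ℝ y (r • normalize x) = r * ‖y‖ * Real.cos (angle x y) := by
  rw [real_inner_smul_right, ← cos_angle_mul_norm_mul_norm, angle_normalize_right,
    norm_normalize hx, angle_comm]
  ring

lemma dist_smul_normalize_sq (hx : x ≠ 0) (r : ℝ) :
    dist y (r • normalize x) ^ 2 = ‖y‖ ^ 2 - 2 * r * ‖y‖ * Real.cos (angle x y) + r ^ 2 := by
  rw [dist_eq_norm, norm_sub_sq_real, inner_smul_normalize hx,
    norm_smul_normalize_eq_abs hx, sq_abs]
  ring

lemma dist_smul_normalize_le_iff (hx : x ≠ 0) (hxr : ‖x‖ ≤ r) :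
    dist y (r • normalize x) ≤ r - ‖x‖ ↔
      ‖y‖ ^ 2 - ‖x‖ ^ 2 + 2 * r * ‖x‖ ≤ 2 * r * ‖y‖ * Real.cos (angle x y) := by
  rw [← sq_le_sq₀ dist_nonneg (sub_nonneg.2 hxr), dist_smul_normalize_sq hx, sub_sq]
  constructor <;> intro h <;> linarith

theorem stmt_9_general (hxy : min ‖x‖ ‖y‖ ≤ r) (hx : x ≠ 0) (hy : y ≠ 0)
    (h : (|‖x‖ ^ 2 - ‖y‖ ^ 2| + 2 * r * min ‖x‖ ‖y‖) / (2 * r * max ‖x‖ ‖y‖) ≤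
      Real.cos (angle x y)) :
    IsLeast ((fun z => max (dist x z) (dist y z)) '' sphere (0 : V) r) (r - min ‖x‖ ‖y‖) := by
  wlog hle : ‖x‖ ≤ ‖y‖ generalizing x y
  · simp only [max_comm (dist x _), min_comm ‖x‖]
    rw [min_comm] at hxy
    rw [abs_sub_comm, min_comm, max_comm, angle_comm] at h
    exact this hxy hy hx h (le_of_not_ge hle)
  rw [min_eq_left hle] at hxy ⊢
  have hsq : ‖x‖ ^ 2 ≤ ‖y‖ ^ 2 := pow_le_pow_left₀ (norm_nonneg x) hle 2
  have hpos : 0 < 2 * r * ‖y‖ :=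
    mul_pos (mul_pos two_pos ((norm_pos_iff.2 hx).trans_le hxy)) (norm_pos_iff.2 hy)
  rw [min_eq_left hle, max_eq_right hle, abs_sub_comm, abs_of_nonneg (sub_nonneg.2 hsq),
    div_le_iff₀' hpos] at h
  exact isLeast_max_dist_image_sphere hx hxy ((dist_smul_normalize_le_iff hx hxy).2 h)

end InnerProductSpace

/-- If `x, y ∈ 𝔹ⁿ` are nonzero, `μ` is the angle between `x` and `y`, and
`cos μ ≥ (||x|²−|y|²| + 2 min{|x|,|y|}) / (2 max{|x|,|y|})`, then
`c̃_{𝔹ⁿ}(x,y) = |x−y| / (1 − min{|x|,|y|})`. -/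
theorem stmt_9 {n : ℕ} (x y : EuclideanSpace ℝ (Fin (n + 2)))
    (hx : x ∈ ball (0 : EuclideanSpace ℝ (Fin (n + 2))) 1)
    (hy : y ∈ ball (0 : EuclideanSpace ℝ (Fin (n + 2))) 1)
    (hx0 : x ≠ 0) (hy0 : y ≠ 0)
    (h : (|‖x‖ ^ 2 - ‖y‖ ^ 2| + 2 * min ‖x‖ ‖y‖) / (2 * max ‖x‖ ‖y‖) ≤
      Real.cos (InnerProductGeometry.angle x y)) :
    ctildeB x y = dist x y / (1 - min ‖x‖ ‖y‖) := by
  have hxy : min ‖x‖ ‖y‖ ≤ 1 := (min_le_left _ _).trans (mem_ball_zero_iff.mp hx).le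
  exact congrArg (dist x y / ·)
    (stmt_9_general hxy hx0 hy0 (by simpa only [mul_one] using h)).csInf_eq
end

section
/- Let G and G′ each be either the upper half-space ℍⁿ or the open unit ball 𝔹ⁿ, and let f : G → G′ be a bijection of G onto G′ which is conformal at every point of G. Then for all x, y ∈ G, c̃_{G′}(f(x), f(y)) ≤ 2·c̃_G(x, y). -/
open Metric Set

/-- The new hyperbolic type metric of Song and Wang:
`c̃_G(x,y) = |x−y| / inf_{z∈∂G} max{|x−z|, |y−z|}`. -/
noncomputable def ctilde {n : ℕ} (G : Set (EuclideanSpace ℝ (Fin n)))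
    (x y : EuclideanSpace ℝ (Fin n)) : ℝ :=
  dist x y / sInf ((fun z => max (dist x z) (dist y z)) '' frontier G)

/-- The upper half-space `ℍⁿ = {x ∈ ℝⁿ : xₙ > 0}` (dimension `n + 2 ≥ 2`). -/
def upperHalfSpace (n : ℕ) : Set (EuclideanSpace ℝ (Fin (n + 2))) :=
  {x | 0 < x (Fin.last (n + 1))}

/-!
Put `δ(x) = xₙ` on the half-space and `δ(x) = (1 - |x|²) / 2` on the ball, so that `1 / δ` is the
hyperbolic density, and let `A(x, y) = √(|x - y|² + 4 δ(x) δ(y))`; then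
`T(x, y) = |x - y| / A(x, y)` is `tanh (ρ / 2)` for the hyperbolic distance `ρ`. In the half-space
`A(x, y)` is the distance from `x` to the mirror image of `y`, and the segment between these two
points crosses the boundary. Hence the denominator of `c̃` lies between `A / 2` and `A`; the same
bounds hold in the ball, and `T ≤ c̃ ≤ 2T` in both cases. It remains to see that a conformal
bijection `f` does not increase `T`, which is the Schwarz–Pick lemma.

Möbius transformations reduce Schwarz–Pick to a conformal bijection `g` of the ball fixing `0`, with
inverse `k`, and the claim `|g'(0)| ≤ 1`. Instead of Liouville's theorem (which also fails in the
plane) a length–area estimate for `log |g|` on a ring `a < |x| < b` is used: as `a → 0` and `b → 1`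
it gives `1 ≤ |g'(0)|ᴺ |k'(0)|` in dimension `N`, and the same for `k`. Since
`|g'(0)| |k'(0)| = 1` and `N ≥ 2`, this forces `|g'(0)| = 1`.
-/

section ConformalLinearMap

variable {V W X : Type*} [NormedAddCommGroup V] [NormedSpace ℝ V] [NormedAddCommGroup W]
  [NormedSpace ℝ W] [NormedAddCommGroup X] [NormedSpace ℝ X]

lemma norm_comp_of_isConformalMap [Nontrivial W] {L : W →L[ℝ] X} (hL : IsConformalMap L)
    (A : V →L[ℝ] W) : ‖L ∘L A‖ = ‖L‖ * ‖A‖ := by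
  obtain ⟨c, -, U, rfl⟩ := hL
  simp [ContinuousLinearMap.smul_comp, norm_smul, U.norm_toContinuousLinearMap,
    U.norm_toContinuousLinearMap_comp]

lemma norm_fderiv_comp_of_conformalAt [Nontrivial W] {g : W → X} {f : V → W} {p : V}
    (hg : ConformalAt g (f p)) (hf : DifferentiableAt ℝ f p) :
    ‖fderiv ℝ (g ∘ f) p‖ = ‖fderiv ℝ g (f p)‖ * ‖fderiv ℝ f p‖ := by
  rw [fderiv_comp p hg.differentiableAt hf,
    norm_comp_of_isConformalMap (conformalAt_iff_isConformalMap_fderiv.1 hg)]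

lemma exists_continuousLinearEquiv_of_isConformalMap [FiniteDimensional ℝ V] {L : V →L[ℝ] V}
    (hL : IsConformalMap L) :
    ∃ e : V ≃L[ℝ] V, (e : V →L[ℝ] V) = L ∧ IsConformalMap (e.symm : V →L[ℝ] V) := by
  obtain ⟨c, hc, U, rfl⟩ := hL
  let U' : V ≃ₗᵢ[ℝ] V := U.toLinearIsometryEquiv rfl
  refine ⟨U'.toContinuousLinearEquiv.trans (.smulLeft (Units.mk0 c hc)), ?_,
    c⁻¹, inv_ne_zero hc, U'.symm.toLinearIsometry, ?_⟩
  · ext v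
    simp [U']
  · ext v
    exact map_smul U'.symm c⁻¹ v

end ConformalLinearMap

section Determinant

variable {E : Type*} [NormedAddCommGroup E] [InnerProductSpace ℝ E] [FiniteDimensional ℝ E]

lemma abs_det_linearIsometryEquiv (U : E ≃ₗᵢ[ℝ] E) :
    |LinearMap.det (U.toLinearEquiv : E →ₗ[ℝ] E)| = 1 := by
  let b := stdOrthonormalBasis ℝ E
  have hdet := b.toBasis.det_comp (U.toLinearEquiv : E →ₗ[ℝ] E) b
  have hone : b.toBasis.det b = 1 := by simpa using b.toBasis.det_self
  rw [hone, mul_one] at hdet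
  rw [← hdet]
  exact b.det_to_matrix_orthonormalBasis (b.map U)

lemma abs_det_of_isConformalMap [Nontrivial E] {L : E →L[ℝ] E} (hL : IsConformalMap L) :
    |L.det| = ‖L‖ ^ Module.finrank ℝ E := by
  obtain ⟨c, -, U, rfl⟩ := hL
  have hdet : (c • U.toContinuousLinearMap).det = c ^ Module.finrank ℝ E *
      LinearMap.det ((U.toLinearIsometryEquiv rfl).toLinearEquiv : E →ₗ[ℝ] E) := by
    rw [ContinuousLinearMap.det, ← LinearMap.det_smul]
    rfl
  rw [hdet, abs_mul, abs_det_linearIsometryEquiv, mul_one, abs_pow, norm_smul,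
    U.norm_toContinuousLinearMap, mul_one, Real.norm_eq_abs]

end Determinant

section LocalSurjectivity

variable {V H : Type*} [NormedAddCommGroup V] [NormedSpace ℝ V] [NormedAddCommGroup H]
  [InnerProductSpace ℝ H]

lemma eq_of_isLocalMin_norm_sub {f : V → H} {z : V} {w : H} (hf : DifferentiableAt ℝ f z)
    (hsurj : Function.Surjective (fderiv ℝ f z)) (hmin : IsLocalMin (fun x => ‖f x - w‖ ^ 2) z) :
    f z = w := by
  have hcrit := hmin.hasFDerivAt_eq_zero (hf.hasFDerivAt.sub_const w).norm_sq
  obtain ⟨v, hv⟩ := hsurj (f z - w)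
  have hinner : inner ℝ (f z - w) (fderiv ℝ f z v) = (0 : ℝ) := by
    simpa [inner_sub_left] using DFunLike.congr_fun hcrit v
  rwa [hv, inner_self_eq_zero, sub_eq_zero] at hinner

-- A nearest point to `w` in the image of a small closed ball comes from the open ball, because `f`
-- keeps the bounding sphere away from `f p`; there `‖f - w‖ ^ 2` is critical, so it vanishes.
lemma image_mem_nhds_of_injOn_of_surjective_fderiv [FiniteDimensional ℝ V] [Nontrivial V]
    {f : V → H} {s : Set V} {p : V} (hs : s ∈ nhds p) (hinj : InjOn f s)
    (hf : ∀ x ∈ s, DifferentiableAt ℝ f x)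
    (hsurj : ∀ x ∈ s, Function.Surjective (fderiv ℝ f x)) : f '' s ∈ nhds (f p) := by
  have : ProperSpace V := FiniteDimensional.proper ℝ V
  obtain ⟨r, hr, hrs⟩ := Metric.nhds_basis_closedBall.mem_iff.1 hs
  have hcont : ContinuousOn f (closedBall p r) := fun x hx =>
    (hf x (hrs hx)).continuousAt.continuousWithinAt
  have hdist (w : H) : ContinuousOn (fun x => dist (f x) w) (closedBall p r) :=
    (continuous_id.dist continuous_const).comp_continuousOn hcont
  have hp : p ∈ closedBall p r := mem_closedBall_self hr.le
  obtain ⟨y, hy, hymin⟩ := (isCompact_sphere p r).exists_isMinOn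
    (NormedSpace.sphere_nonempty.2 hr.le)
    ((hdist (f p)).mono sphere_subset_closedBall)
  have hm : 0 < dist (f y) (f p) := dist_pos.2 fun heq =>
    ne_of_mem_sphere hy hr.ne' (hinj (hrs (sphere_subset_closedBall hy)) (hrs hp) heq)
  refine Filter.mem_of_superset (ball_mem_nhds (f p) (half_pos hm)) fun w hw => ?_
  obtain ⟨z, hz, hzmin⟩ := (isCompact_closedBall p r).exists_isMinOn ⟨p, hp⟩ (hdist w)
  have hzball : z ∈ ball p r := by
    refine (mem_closedBall.1 hz).lt_of_ne fun hzr => ?_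
    have hfar : dist (f y) (f p) ≤ dist (f z) (f p) := hymin (mem_sphere.2 hzr)
    have hnear : dist (f z) w ≤ dist (f p) w := hzmin hp
    have htri := dist_triangle (f z) w (f p)
    rw [mem_ball] at hw
    rw [dist_comm (f p) w] at hnear
    linarith
  refine ⟨z, hrs hz, eq_of_isLocalMin_norm_sub (hf z (hrs hz)) (hsurj z (hrs hz)) ?_⟩
  filter_upwards [isOpen_ball.mem_nhds hzball] with x hx
  have hle : dist (f z) w ≤ dist (f x) w := hzmin (ball_subset_closedBall hx)
  rw [dist_eq_norm, dist_eq_norm] at hle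
  gcongr

end LocalSurjectivity

section ConformalBijOn

variable {E : Type*} [NormedAddCommGroup E] [InnerProductSpace ℝ E]

/-- `f` is a conformal mapping of the set `s` onto the set `t`. -/
structure ConformalBijOn (f : E → E) (s t : Set E) : Prop where
  bijOn : BijOn f s t
  conformalAt : ∀ p ∈ s, ConformalAt f p

namespace ConformalBijOn

variable {f g : E → E} {s t u : Set E} {p : E}

lemma differentiableAt (hf : ConformalBijOn f s t) (hp : p ∈ s) : DifferentiableAt ℝ f p :=
  (hf.conformalAt p hp).differentiableAt

lemma isConformalMap_fderiv (hf : ConformalBijOn f s t) (hp : p ∈ s) :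
    IsConformalMap (fderiv ℝ f p) :=
  conformalAt_iff_isConformalMap_fderiv.1 (hf.conformalAt p hp)

lemma continuousOn (hf : ConformalBijOn f s t) : ContinuousOn f s := fun _ hp =>
  (hf.differentiableAt hp).continuousAt.continuousWithinAt

lemma comp (hg : ConformalBijOn g t u) (hf : ConformalBijOn f s t) :
    ConformalBijOn (g ∘ f) s u where
  bijOn := hg.bijOn.comp hf.bijOn
  conformalAt p hp := (hg.conformalAt _ (hf.bijOn.mapsTo hp)).comp p (hf.conformalAt p hp)

lemma norm_fderiv_comp [Nontrivial E] (hg : ConformalBijOn g t u) (hf : ConformalBijOn f s t)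
    (hp : p ∈ s) : ‖fderiv ℝ (g ∘ f) p‖ = ‖fderiv ℝ g (f p)‖ * ‖fderiv ℝ f p‖ :=
  norm_fderiv_comp_of_conformalAt (hg.conformalAt _ (hf.bijOn.mapsTo hp)) (hf.differentiableAt hp)

lemma norm_fderiv_mul_of_leftInvOn [Nontrivial E] (hg : ConformalBijOn g t s)
    (hf : ConformalBijOn f s t) (hs : IsOpen s) (hgf : LeftInvOn g f s) (hp : p ∈ s) :
    ‖fderiv ℝ g (f p)‖ * ‖fderiv ℝ f p‖ = 1 := by
  have hid : g ∘ f =ᶠ[nhds p] id := Filter.eventually_of_mem (hs.mem_nhds hp) fun x hx => hgf hx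
  rw [← hg.norm_fderiv_comp hf hp, hid.fderiv_eq, fderiv_id, ContinuousLinearMap.norm_id]

variable [FiniteDimensional ℝ E] [Nontrivial E]

lemma image_mem_nhds (hf : ConformalBijOn f s t) {v : Set E} (hvs : v ⊆ s) (hv : v ∈ nhds p) :
    f '' v ∈ nhds (f p) := by
  refine image_mem_nhds_of_injOn_of_surjective_fderiv hv (hf.bijOn.injOn.mono hvs)
    (fun x hx => hf.differentiableAt (hvs hx)) fun x hx => ?_
  obtain ⟨e, he, -⟩ :=
    exists_continuousLinearEquiv_of_isConformalMap (hf.isConformalMap_fderiv (hvs hx))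
  rw [← he]
  exact e.surjective

lemma continuousAt_of_leftInvOn (hf : ConformalBijOn f s t) (hgf : LeftInvOn g f s)
    (hs : IsOpen s) (hp : p ∈ s) : ContinuousAt g (f p) := by
  intro v hv
  rw [hgf hp] at hv
  rw [Filter.mem_map]
  filter_upwards [hf.image_mem_nhds inter_subset_right (Filter.inter_mem hv (hs.mem_nhds hp))]
  rintro _ ⟨z, ⟨hzv, hzs⟩, rfl⟩
  rwa [mem_preimage, hgf hzs]

lemma symm (hf : ConformalBijOn f s t) (hs : IsOpen s) (hinv : InvOn g f s t) :
    ConformalBijOn g t s where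
  bijOn := hf.bijOn.symm hinv.symm
  conformalAt q hq := by
    obtain ⟨p, hp, rfl⟩ := hf.bijOn.surjOn hq
    obtain ⟨e, he, he_symm⟩ :=
      exists_continuousLinearEquiv_of_isConformalMap (hf.isConformalMap_fderiv hp)
    have hderiv : HasFDerivAt f (e : E →L[ℝ] E) (g (f p)) := by
      rw [hinv.1 hp, he]
      exact (hf.differentiableAt hp).hasFDerivAt
    have hright : ∀ᶠ y in nhds (f p), f (g y) = y :=
      Filter.mem_of_superset (hf.image_mem_nhds Subset.rfl (hs.mem_nhds hp))
        (hf.bijOn.image_eq ▸ hinv.2)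
    exact ⟨_, hderiv.of_local_left_inverse
      (hf.continuousAt_of_leftInvOn hinv.1 hs hp) hright, he_symm⟩

end ConformalBijOn

end ConformalBijOn

section OneVariable

open MeasureTheory

lemma ofReal_sub_le_lintegral_of_abs_deriv_le {h k : ℝ → ℝ} {a b : ℝ} (hab : a ≤ b)
    (hd : ∀ t ∈ Icc a b, DifferentiableAt ℝ h t) (hk : ∀ t ∈ Ioo a b, |deriv h t| ≤ k t) :
    ENNReal.ofReal (h b - h a) ≤ ∫⁻ t in Ioo a b, ENNReal.ofReal (k t) := by
  rcases eq_top_or_lt_top (∫⁻ t in Ioo a b, ENNReal.ofReal (k t)) with htop | hfin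
  · exact htop ▸ le_top
  have hle : ∫⁻ t in Ioo a b, ‖deriv h t‖ₑ ≤ ∫⁻ t in Ioo a b, ENNReal.ofReal (k t) := by
    refine setLIntegral_mono' measurableSet_Ioo fun t ht => ?_
    rw [← ofReal_norm, Real.norm_eq_abs]
    exact ENNReal.ofReal_le_ofReal (hk t ht)
  have hint : IntegrableOn (deriv h) (Ioo a b) :=
    ⟨(measurable_deriv h).aestronglyMeasurable, hle.trans_lt hfin⟩
  have hftc : ∫ t in Ioo a b, deriv h t = h b - h a := by
    rw [← integral_Ioc_eq_integral_Ioo, ← intervalIntegral.integral_of_le hab]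
    refine intervalIntegral.integral_eq_sub_of_hasDerivAt
      (fun t ht => (hd t (uIcc_of_le hab ▸ ht)).hasDerivAt) ?_
    rwa [intervalIntegrable_iff_integrableOn_Ioo_of_le hab]
  calc ENNReal.ofReal (h b - h a) ≤ ‖∫ t in Ioo a b, deriv h t‖ₑ := by
        rw [hftc, ← ofReal_norm]
        exact ENNReal.ofReal_le_ofReal (Real.le_norm_self _)
    _ ≤ ∫⁻ t in Ioo a b, ‖deriv h t‖ₑ := enorm_integral_le_lintegral_enorm _
    _ ≤ _ := hle

lemma lintegral_Ioo_const_mul_inv {a b c : ℝ} (ha : 0 < a) (hab : a ≤ b) (hc : 0 ≤ c) :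
    ∫⁻ t in Ioo a b, ENNReal.ofReal (c * t⁻¹) = ENNReal.ofReal (c * Real.log (b / a)) := by
  have hint : IntervalIntegrable (fun t : ℝ => c * t⁻¹) volume a b := by
    refine ContinuousOn.intervalIntegrable (continuousOn_const.mul (continuousOn_inv₀.mono ?_))
    rw [uIcc_of_le hab]
    exact fun t ht => (ha.trans_le ht.1).ne'
  rw [← ofReal_integral_eq_lintegral_ofReal
      ((intervalIntegrable_iff_integrableOn_Ioo_of_le hab).1 hint),
    ← integral_Ioc_eq_integral_Ioo, ← intervalIntegral.integral_of_le hab,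
    intervalIntegral.integral_const_mul, integral_inv_of_pos ha (ha.trans_le hab)]
  filter_upwards [ae_restrict_mem measurableSet_Ioo] with t ht
  exact mul_nonneg hc (inv_nonneg.2 (ha.trans ht.1).le)

-- Young's inequality for the exponents `N` and `N / (N - 1)`, weighted so that the `N`-th power of
-- `X` comes with the Jacobian `t ^ (N - 1)` of polar coordinates; it amounts to Bernoulli's
-- inequality.
lemma le_pow_mul_pow_div_add_mul_inv {N : ℕ} (hN : 1 ≤ N) {t X : ℝ} (ht : 0 < t) (hX : 0 ≤ X) :
    X ≤ t ^ (N - 1) * (X ^ N / N) + (1 - 1 / (N : ℝ)) * t⁻¹ := by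
  obtain ⟨m, rfl⟩ := Nat.exists_eq_add_of_le' hN
  have hbernoulli : 1 + ((m + 1 : ℕ) : ℝ) * (t * X - 1) ≤ (t * X) ^ (m + 1) := by
    simpa using one_add_mul_le_pow (a := t * X - 1) (by nlinarith [mul_nonneg ht.le hX]) (m + 1)
  have hN0 : (0 : ℝ) < ((m + 1 : ℕ) : ℝ) := by positivity
  rw [Nat.add_sub_cancel, ← sub_nonneg]
  generalize ((m + 1 : ℕ) : ℝ) = M at *
  have hdiff : t ^ m * (X ^ (m + 1) / M) + (1 - 1 / M) * t⁻¹ - X =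
      ((t * X) ^ (m + 1) - (1 + M * (t * X - 1))) / (t * M) := by
    field_simp
    ring
  rw [hdiff]
  exact div_nonneg (sub_nonneg.2 hbernoulli) (by positivity)

end OneVariable

section PolarCoordinates

open MeasureTheory

variable {E : Type*} [NormedAddCommGroup E]

/-- The open spherical ring around the origin with radii `a` and `b`. -/
def annulus (E : Type*) [NormedAddCommGroup E] (a b : ℝ) : Set E :=
  {x | a < ‖x‖ ∧ ‖x‖ < b}

lemma measurableSet_annulus [MeasurableSpace E] [OpensMeasurableSpace E] (a b : ℝ) :
    MeasurableSet (annulus E a b) :=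
  (measurableSet_lt measurable_const measurable_norm).inter
    (measurableSet_lt measurable_norm measurable_const)

variable [NormedSpace ℝ E]

lemma norm_smul_coe_sphere {t : ℝ} (ht : 0 ≤ t) (θ : sphere (0 : E) 1) : ‖t • (θ : E)‖ = t := by
  rw [norm_smul, norm_eq_of_mem_sphere, mul_one, Real.norm_of_nonneg ht]

variable [FiniteDimensional ℝ E] [Nontrivial E] [MeasurableSpace E] [BorelSpace E]
  (μ : Measure E) [μ.IsAddHaarMeasure]

lemma lintegral_eq_lintegral_sphere_lintegral_Ioi {F : E → ENNReal} (hF : Measurable F) :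
    ∫⁻ x, F x ∂μ = ∫⁻ θ : sphere (0 : E) 1, ∫⁻ t in Ioi (0 : ℝ),
      ENNReal.ofReal (t ^ (Module.finrank ℝ E - 1)) * F (t • (θ : E)) ∂volume ∂μ.toSphere := by
  have hpunctured : ∫⁻ x, F x ∂μ = ∫⁻ x : ({0}ᶜ : Set E), F x ∂(μ.comap (↑)) := by
    rw [lintegral_subtype_comap (measurableSet_singleton _).compl F, restrict_compl_singleton]
  have hchange := μ.measurePreserving_homeomorphUnitSphereProd.lintegral_comp_emb
    (Homeomorph.measurableEmbedding _)
    (fun p : sphere (0 : E) 1 × Ioi (0 : ℝ) => F (p.2.1 • (p.1 : E)))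
  have hpolar (x : ({0}ᶜ : Set E)) :
      (homeomorphUnitSphereProd E x).2.1 • ((homeomorphUnitSphereProd E x).1 : E) = x := by
    rw [← homeomorphUnitSphereProd_symm_apply_coe, (homeomorphUnitSphereProd E).symm_apply_apply]
  simp only [hpolar] at hchange
  have hmeas : Measurable (fun p : sphere (0 : E) 1 × Ioi (0 : ℝ) => F (p.2.1 • (p.1 : E))) :=
    hF.comp (by fun_prop)
  rw [hpunctured, hchange, lintegral_prod _ hmeas.aemeasurable]
  refine lintegral_congr fun θ => ?_
  rw [Measure.volumeIoiPow, lintegral_withDensity_eq_lintegral_mul]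
  · rw [← lintegral_subtype_comap measurableSet_Ioi
      (fun t : ℝ => ENNReal.ofReal (t ^ (Module.finrank ℝ E - 1)) * F (t • (θ : E)))]
    rfl
  · fun_prop
  · exact hmeas.comp (by fun_prop : Measurable fun r : Ioi (0 : ℝ) => (θ, r))

lemma lintegral_annulus_eq_lintegral_sphere_lintegral_Ioo {F : E → ENNReal} (hF : Measurable F)
    {a b : ℝ} (ha : 0 ≤ a) :
    ∫⁻ x in annulus E a b, F x ∂μ = ∫⁻ θ : sphere (0 : E) 1, ∫⁻ t in Ioo a b,
      ENNReal.ofReal (t ^ (Module.finrank ℝ E - 1)) * F (t • (θ : E)) ∂volume ∂μ.toSphere := by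
  rw [← lintegral_indicator (measurableSet_annulus a b),
    lintegral_eq_lintegral_sphere_lintegral_Ioi μ (hF.indicator (measurableSet_annulus a b))]
  refine lintegral_congr fun θ => ?_
  rw [← lintegral_indicator measurableSet_Ioi, ← lintegral_indicator measurableSet_Ioo]
  refine lintegral_congr fun t => ?_
  rcases le_or_gt t 0 with ht | ht
  · simp [indicator, not_lt.2 ht, not_lt.2 (ht.trans ha)]
  · simp [indicator, annulus, ht, norm_smul_coe_sphere ht.le]

lemma lintegral_annulus_const_mul_inv_norm_pow {a b c : ℝ} (ha : 0 < a) (hab : a ≤ b)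
    (hc : 0 ≤ c) :
    ∫⁻ x in annulus E a b, ENNReal.ofReal (c * (‖x‖ ^ Module.finrank ℝ E)⁻¹) ∂μ =
      μ.toSphere univ * ENNReal.ofReal (c * Real.log (b / a)) := by
  have hradial (θ : sphere (0 : E) 1) : ∫⁻ t in Ioo a b,
      ENNReal.ofReal (t ^ (Module.finrank ℝ E - 1)) *
        ENNReal.ofReal (c * (‖t • (θ : E)‖ ^ Module.finrank ℝ E)⁻¹) =
      ENNReal.ofReal (c * Real.log (b / a)) := by
    rw [← lintegral_Ioo_const_mul_inv ha hab hc]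
    refine setLIntegral_congr_fun measurableSet_Ioo fun t ht => ?_
    have ht0 : 0 < t := ha.trans ht.1
    rw [norm_smul_coe_sphere ht0.le, ← ENNReal.ofReal_mul (by positivity)]
    congr 1
    rw [← pow_sub_one_mul (n := Module.finrank ℝ E) Module.finrank_pos.ne' t]
    field_simp
  rw [lintegral_annulus_eq_lintegral_sphere_lintegral_Ioo μ (by fun_prop) ha.le]
  simp only [hradial, lintegral_const]
  rw [mul_comm]

end PolarCoordinates

section LengthArea

open MeasureTheory

section Rays

variable {E : Type*} [NormedAddCommGroup E] [NormedSpace ℝ E]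

lemma ofReal_sub_le_lintegral_norm_fderiv_ray {u : E → ℝ} {θ : E} (hθ : ‖θ‖ ≤ 1) {a b : ℝ}
    (hab : a ≤ b) (hu : ∀ t ∈ Icc a b, DifferentiableAt ℝ u (t • θ)) :
    ENNReal.ofReal (u (b • θ) - u (a • θ)) ≤
      ∫⁻ t in Ioo a b, ENNReal.ofReal ‖fderiv ℝ u (t • θ)‖ := by
  have hderiv (t) (ht : t ∈ Icc a b) :
      HasDerivAt (fun s : ℝ => u (s • θ)) (fderiv ℝ u (t • θ) θ) t := by
    have hray : HasDerivAt (fun s : ℝ => s • θ) θ t := by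
      simpa using (hasDerivAt_id t).smul_const θ
    exact (hu t ht).hasFDerivAt.comp_hasDerivAt t hray
  refine ofReal_sub_le_lintegral_of_abs_deriv_le hab
    (fun t ht => (hderiv t ht).differentiableAt) fun t ht => ?_
  rw [(hderiv t (Ioo_subset_Icc_self ht)).deriv]
  exact (fderiv ℝ u (t • θ)).le_of_opNorm_le_of_le le_rfl hθ |>.trans (by simp)

lemma ofReal_sub_le_lintegral_norm_fderiv_pow_ray {u : E → ℝ} {θ : E} (hθ : ‖θ‖ ≤ 1) {a b : ℝ}
    (ha : 0 < a) (hab : a ≤ b) (hu : ∀ t ∈ Icc a b, DifferentiableAt ℝ u (t • θ)) {N : ℕ}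
    (hN : 1 ≤ N) :
    ENNReal.ofReal (u (b • θ) - u (a • θ)) ≤
      (∫⁻ t in Ioo a b,
        ENNReal.ofReal (t ^ (N - 1)) * ENNReal.ofReal (‖fderiv ℝ u (t • θ)‖ ^ N / N)) +
      ENNReal.ofReal ((1 - 1 / (N : ℝ)) * Real.log (b / a)) := by
  have hcoef : 0 ≤ 1 - 1 / (N : ℝ) :=
    sub_nonneg.2 (div_le_one_of_le₀ (by exact_mod_cast hN) (by positivity))
  calc ENNReal.ofReal (u (b • θ) - u (a • θ))
      ≤ ∫⁻ t in Ioo a b, ENNReal.ofReal ‖fderiv ℝ u (t • θ)‖ :=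
        ofReal_sub_le_lintegral_norm_fderiv_ray hθ hab hu
    _ ≤ ∫⁻ t in Ioo a b, (ENNReal.ofReal (t ^ (N - 1)) *
          ENNReal.ofReal (‖fderiv ℝ u (t • θ)‖ ^ N / N) +
          ENNReal.ofReal ((1 - 1 / (N : ℝ)) * t⁻¹)) := by
        refine setLIntegral_mono' measurableSet_Ioo fun t ht => ?_
        have ht0 : 0 < t := ha.trans ht.1
        rw [← ENNReal.ofReal_mul (by positivity),
          ← ENNReal.ofReal_add (by positivity) (by positivity)]
        exact ENNReal.ofReal_le_ofReal (le_pow_mul_pow_div_add_mul_inv hN ht0 (norm_nonneg _))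
    _ = _ := by
        rw [lintegral_add_right _ (by fun_prop), lintegral_Ioo_const_mul_inv ha hab hcoef]

end Rays

variable {E : Type*} [NormedAddCommGroup E] [NormedSpace ℝ E] [FiniteDimensional ℝ E]
  [Nontrivial E] [MeasurableSpace E] [BorelSpace E] (μ : Measure E) [μ.IsAddHaarMeasure]

-- Integrate the derivative of `u` along rays, apply Young's inequality, average over the sphere.
lemma toSphere_mul_ofReal_sub_le_lintegral_norm_fderiv_pow {u : E → ℝ} {a b m M : ℝ} (ha : 0 < a)
    (hab : a ≤ b) (hu : ∀ x, a ≤ ‖x‖ → ‖x‖ ≤ b → DifferentiableAt ℝ u x)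
    (hM : ∀ x, ‖x‖ = a → u x ≤ M) (hm : ∀ x, ‖x‖ = b → m ≤ u x) :
    μ.toSphere univ * ENNReal.ofReal (m - M) ≤
      ∫⁻ x in annulus E a b,
        ENNReal.ofReal (‖fderiv ℝ u x‖ ^ Module.finrank ℝ E / Module.finrank ℝ E) ∂μ +
      μ.toSphere univ *
        ENNReal.ofReal ((1 - 1 / (Module.finrank ℝ E : ℝ)) * Real.log (b / a)) := by
  set N := Module.finrank ℝ E
  have hF : Measurable fun x => ENNReal.ofReal (‖fderiv ℝ u x‖ ^ N / N) := by
    have := measurable_fderiv ℝ u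
    fun_prop
  have hray (θ : sphere (0 : E) 1) : ENNReal.ofReal (m - M) ≤
      (∫⁻ t in Ioo a b,
        ENNReal.ofReal (t ^ (N - 1)) * ENNReal.ofReal (‖fderiv ℝ u (t • (θ : E))‖ ^ N / N)) +
      ENNReal.ofReal ((1 - 1 / (N : ℝ)) * Real.log (b / a)) := by
    refine (ENNReal.ofReal_le_ofReal (sub_le_sub (hm _ (norm_smul_coe_sphere (ha.le.trans hab) θ))
      (hM _ (norm_smul_coe_sphere ha.le θ)))).trans
      (ofReal_sub_le_lintegral_norm_fderiv_pow_ray (norm_eq_of_mem_sphere θ).le ha hab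
        (fun t ht => ?_) Module.finrank_pos)
    have hnorm := norm_smul_coe_sphere (ha.le.trans ht.1) θ
    exact hu _ (hnorm.symm ▸ ht.1) (hnorm.symm ▸ ht.2)
  calc μ.toSphere univ * ENNReal.ofReal (m - M)
      = ∫⁻ _ : sphere (0 : E) 1, ENNReal.ofReal (m - M) ∂μ.toSphere := by
        rw [lintegral_const, mul_comm]
    _ ≤ _ := lintegral_mono hray
    _ = _ := by
        rw [lintegral_add_right _ measurable_const, lintegral_const,
          ← lintegral_annulus_eq_lintegral_sphere_lintegral_Ioo μ hF ha.le, mul_comm]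

end LengthArea

section RingCapacity

open MeasureTheory

variable {E : Type*} [NormedAddCommGroup E] [InnerProductSpace ℝ E]

lemma norm_fderiv_log_norm_le {V : Type*} [NormedAddCommGroup V] [NormedSpace ℝ V] {g : V → E}
    {x : V} (hg : DifferentiableAt ℝ g x) (hx : g x ≠ 0) :
    ‖fderiv ℝ (fun y => Real.log ‖g y‖) x‖ ≤ ‖fderiv ℝ g x‖ / ‖g x‖ := by
  have hnorm : DifferentiableAt ℝ (fun y : E => ‖y‖) (g x) := differentiableAt_id.norm ℝ hx
  have hle : ‖fderiv ℝ (fun y : E => ‖y‖) (g x)‖ ≤ 1 := by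
    simpa using norm_fderiv_le_of_lipschitz ℝ (x₀ := g x) (lipschitzWith_one_norm (E := E))
  have hcomp : fderiv ℝ (fun y => ‖g y‖) x =
      fderiv ℝ (fun y : E => ‖y‖) (g x) ∘L fderiv ℝ g x := fderiv_comp x hnorm hg
  rw [fderiv.log (hg.norm ℝ hx) (norm_ne_zero_iff.2 hx), norm_smul, norm_inv, norm_norm,
    inv_mul_eq_div, hcomp]
  gcongr
  exact (ContinuousLinearMap.opNorm_comp_le _ _).trans
    (mul_le_of_le_one_left (norm_nonneg _) hle)

variable [FiniteDimensional ℝ E] [Nontrivial E]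

-- `log ‖g‖` has conformally invariant energy, which is explicit for `log ‖x‖` on a ring.
lemma lintegral_norm_fderiv_log_norm_pow_le [MeasurableSpace E] [BorelSpace E] (μ : Measure E)
    [μ.IsAddHaarMeasure] {g : E → E} {s : Set E} {m R : ℝ} (hs : MeasurableSet s)
    (hg : ∀ x ∈ s, ConformalAt g x) (hinj : InjOn g s) (hmaps : MapsTo g s (annulus E m R))
    (hm : 0 < m) (hmR : m ≤ R) :
    ∫⁻ x in s, ENNReal.ofReal (‖fderiv ℝ (fun y => Real.log ‖g y‖) x‖ ^ Module.finrank ℝ E /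
        Module.finrank ℝ E) ∂μ ≤
      μ.toSphere univ * ENNReal.ofReal (1 / Module.finrank ℝ E * Real.log (R / m)) := by
  set N := Module.finrank ℝ E
  calc _ ≤ ∫⁻ x in s, ENNReal.ofReal |(fderiv ℝ g x).det| *
        ENNReal.ofReal (1 / N * (‖g x‖ ^ N)⁻¹) ∂μ := by
        refine setLIntegral_mono' hs fun x hx => ?_
        rw [abs_det_of_isConformalMap (conformalAt_iff_isConformalMap_fderiv.1 (hg x hx)),
          ← ENNReal.ofReal_mul (by positivity)]
        refine ENNReal.ofReal_le_ofReal ?_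
        calc _ ≤ (‖fderiv ℝ g x‖ / ‖g x‖) ^ N / N := by
              gcongr
              exact norm_fderiv_log_norm_le (hg x hx).differentiableAt
                (norm_pos_iff.1 (hm.trans (hmaps hx).1))
          _ = _ := by
              rw [div_pow]
              ring
    _ = ∫⁻ x in g '' s, ENNReal.ofReal (1 / N * (‖x‖ ^ N)⁻¹) ∂μ :=
        (lintegral_image_eq_lintegral_abs_det_fderiv_mul μ hs
          (fun x hx => (hg x hx).differentiableAt.hasFDerivAt.hasFDerivWithinAt) hinj
          fun y => ENNReal.ofReal (1 / N * (‖y‖ ^ N)⁻¹)).symm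
    _ ≤ ∫⁻ x in annulus E m R, ENNReal.ofReal (1 / N * (‖x‖ ^ N)⁻¹) ∂μ :=
        lintegral_mono_set hmaps.image_subset
    _ = _ := lintegral_annulus_const_mul_inv_norm_pow μ hm hmR (by positivity)

lemma log_sub_log_le_of_conformalAt_of_mapsTo_annulus {g : E → E} {a b c m M R : ℝ} (ha : 0 < a)
    (hab : a < b) (hc : 0 < c) (hm : 0 < m) (hg : ∀ x, a ≤ ‖x‖ → ‖x‖ ≤ b → ConformalAt g x)
    (hg0 : ∀ x, a ≤ ‖x‖ → ‖x‖ ≤ b → g x ≠ 0) (hinj : InjOn g (annulus E a b))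
    (hmaps : MapsTo g (annulus E a b) (annulus E m R)) (hga : ∀ x, ‖x‖ = a → ‖g x‖ ≤ M)
    (hgb : ∀ x, ‖x‖ = b → c ≤ ‖g x‖) :
    Real.log c - Real.log M ≤ 1 / Module.finrank ℝ E * Real.log (R / m) +
      (1 - 1 / (Module.finrank ℝ E : ℝ)) * Real.log (b / a) := by
  let _ : MeasurableSpace E := borel E
  have _ : BorelSpace E := ⟨rfl⟩
  let μ : Measure E := Measure.addHaar
  obtain ⟨r, har, hrb⟩ := exists_between hab
  obtain ⟨x, rfl⟩ := exists_norm_eq E (ha.trans har).le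
  have hmR : m ≤ R := ((hmaps ⟨har, hrb⟩).1.trans (hmaps ⟨har, hrb⟩).2).le
  have henergy := lintegral_norm_fderiv_log_norm_pow_le μ (measurableSet_annulus a b)
    (fun x hx => hg x hx.1.le hx.2.le) hinj hmaps hm hmR
  have hlength := toSphere_mul_ofReal_sub_le_lintegral_norm_fderiv_pow μ
    (u := fun y => Real.log ‖g y‖) ha hab.le
    (fun x hxa hxb => ((hg x hxa hxb).differentiableAt.norm ℝ (hg0 x hxa hxb)).log
      (norm_ne_zero_iff.2 (hg0 x hxa hxb)))
    (fun x hx => Real.log_le_log (norm_pos_iff.2 (hg0 x hx.ge (hx.trans_le hab.le))) (hga x hx))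
    (fun x hx => Real.log_le_log hc (hgb x hx))
  have hsphere : μ.toSphere univ ≠ 0 :=
    Measure.measure_univ_ne_zero.2 (Measure.toSphere_ne_zero μ)
  have hcoef : 0 ≤ 1 - 1 / (Module.finrank ℝ E : ℝ) := sub_nonneg.2
    (div_le_one_of_le₀ (by exact_mod_cast Module.finrank_pos (R := ℝ) (M := E)) (by positivity))
  have hlogR : 0 ≤ Real.log (R / m) := Real.log_nonneg ((one_le_div hm).2 hmR)
  have hlogb : 0 ≤ Real.log (b / a) := Real.log_nonneg ((one_le_div ha).2 hab.le)
  have hle := hlength.trans (add_le_add_left henergy _)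
  rwa [← mul_add, ENNReal.mul_le_mul_iff_right hsphere (measure_ne_top _ _),
    ← ENNReal.ofReal_add (by positivity) (by positivity),
    ENNReal.ofReal_le_ofReal_iff (by positivity)] at hle

end RingCapacity

section SchwarzAtZero

variable {E : Type*} [NormedAddCommGroup E]

lemma eventually_norm_sub_le_of_norm_fderiv_lt {V W : Type*} [NormedAddCommGroup V]
    [NormedSpace ℝ V] [NormedAddCommGroup W] [NormedSpace ℝ W] {f : V → W} {p : V} {L : ℝ}
    (hf : DifferentiableAt ℝ f p) (hL : ‖fderiv ℝ f p‖ < L) :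
    ∀ᶠ x in nhds p, ‖f x - f p‖ ≤ L * ‖x - p‖ := by
  filter_upwards [hf.hasFDerivAt.isLittleO.def (sub_pos.2 hL)] with x hx
  calc ‖f x - f p‖ ≤ ‖f x - f p - fderiv ℝ f p (x - p)‖ + ‖fderiv ℝ f p (x - p)‖ := by
        simpa using norm_add_le (f x - f p - fderiv ℝ f p (x - p)) (fderiv ℝ f p (x - p))
    _ ≤ (L - ‖fderiv ℝ f p‖) * ‖x - p‖ + ‖fderiv ℝ f p‖ * ‖x - p‖ := by
        gcongr
        exact (fderiv ℝ f p).le_opNorm _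
    _ = L * ‖x - p‖ := by ring

lemma exists_lt_one_forall_le_norm [ProperSpace E] {g k : E → E}
    (hk : ContinuousOn k (ball 0 1)) (hmaps : MapsTo k (ball 0 1) (ball 0 1))
    (hinv : LeftInvOn k g (ball 0 1)) {c : ℝ} (hc0 : 0 ≤ c) (hc1 : c < 1) :
    ∃ r < 1, ∀ x, r < ‖x‖ → ‖x‖ < 1 → c ≤ ‖g x‖ := by
  have hsub : closedBall (0 : E) c ⊆ ball 0 1 := closedBall_subset_ball hc1
  obtain ⟨z, hz, hzmax⟩ := (isCompact_closedBall (0 : E) c).exists_isMaxOn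
    ⟨0, mem_closedBall_self hc0⟩ (hk.mono hsub).norm
  refine ⟨‖k z‖, mem_ball_zero_iff.1 (hmaps (hsub hz)), fun x hx hx1 => ?_⟩
  by_contra! hlt
  have hle : ‖k (g x)‖ ≤ ‖k z‖ := hzmax (mem_closedBall_zero_iff.2 hlt.le)
  rw [hinv (mem_ball_zero_iff.2 hx1)] at hle
  exact hle.not_gt hx

variable [InnerProductSpace ℝ E] [FiniteDimensional ℝ E] [Nontrivial E]

lemma log_le_of_norm_fderiv_lt {g k : E → E} (hg : ConformalBijOn g (ball 0 1) (ball 0 1))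
    (hk : ConformalBijOn k (ball 0 1) (ball 0 1)) (hinv : LeftInvOn k g (ball 0 1))
    (hg0 : g 0 = 0) {c L L' : ℝ} (hc0 : 0 < c) (hc1 : c < 1) (hL : ‖fderiv ℝ g 0‖ < L)
    (hL' : ‖fderiv ℝ k 0‖ < L') :
    Module.finrank ℝ E * Real.log c ≤ Module.finrank ℝ E * Real.log L + Real.log L' := by
  have h0 : (0 : E) ∈ ball (0 : E) 1 := mem_ball_self one_pos
  have hk0 : k 0 = 0 := by simpa only [hg0] using hinv h0
  have hL0 : 0 < L := (norm_nonneg _).trans_lt hL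
  have hL0' : 0 < L' := (norm_nonneg _).trans_lt hL'
  obtain ⟨ρ, hρ, hgρ⟩ := Metric.eventually_nhds_iff_ball.1
    (eventually_norm_sub_le_of_norm_fderiv_lt (hg.differentiableAt h0) hL)
  obtain ⟨ρ', hρ', hkρ'⟩ := Metric.eventually_nhds_iff_ball.1
    (eventually_norm_sub_le_of_norm_fderiv_lt (hk.differentiableAt h0) hL')
  simp only [mem_ball_zero_iff, hg0, hk0, sub_zero] at hgρ hkρ'
  obtain ⟨r, hr, hgr⟩ :=
    exists_lt_one_forall_le_norm hk.continuousOn hk.bijOn.mapsTo hinv hc0.le hc1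
  obtain ⟨a, ha0, ha⟩ := exists_between (lt_min one_pos (lt_min hρ (mul_pos hL0' hρ')))
  obtain ⟨ha1, haρ, haρ'⟩ : a < 1 ∧ a < ρ ∧ a < L' * ρ' := by simpa only [lt_min_iff] using ha
  obtain ⟨b, hb, hb1⟩ := exists_between (max_lt ha1 hr)
  obtain ⟨hab, hrb⟩ := max_lt_iff.1 hb
  have hsub {x : E} (hx : ‖x‖ ≤ b) : x ∈ ball (0 : E) 1 := mem_ball_zero_iff.2 (hx.trans_lt hb1)
  have hmaps : MapsTo g (annulus E a b) (annulus E (a / L') 1) := by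
    refine fun x hx => ⟨?_, mem_ball_zero_iff.1 (hg.bijOn.mapsTo (hsub hx.2.le))⟩
    by_contra! hle
    have hbound := hkρ' (g x) (hle.trans_lt ((div_lt_iff₀' hL0').2 haρ'))
    rw [hinv (hsub hx.2.le)] at hbound
    exact (hbound.trans ((le_div_iff₀' hL0').1 hle)).not_gt hx.1
  have hring := log_sub_log_le_of_conformalAt_of_mapsTo_annulus (M := L * a) ha0 hab hc0
    (div_pos ha0 hL0') (fun x _ hx => hg.conformalAt x (hsub hx))
    (fun x hxa hxb hgx => (ha0.trans_le hxa).ne'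
      (norm_eq_zero.2 (hg.bijOn.injOn (hsub hxb) h0 (hgx.trans hg0.symm))))
    (hg.bijOn.injOn.mono fun x hx => hsub hx.2.le) hmaps
    (fun x hx => hx ▸ hgρ x (hx.trans_lt haρ)) fun x hx => hgr x (hx ▸ hrb) (hx ▸ hb1)
  have hN : (1 : ℝ) ≤ Module.finrank ℝ E := by exact_mod_cast Module.finrank_pos (R := ℝ) (M := E)
  have hlogb : Real.log b ≤ 0 := Real.log_nonpos (ha0.trans hab).le hb1.le
  rw [one_div_div, Real.log_mul hL0.ne' ha0.ne', Real.log_div hL0'.ne' ha0.ne',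
    Real.log_div (ha0.trans hab).ne' ha0.ne'] at hring
  field_simp at hring
  nlinarith

lemma log_norm_fderiv_nonneg {g k : E → E} (hg : ConformalBijOn g (ball 0 1) (ball 0 1))
    (hk : ConformalBijOn k (ball 0 1) (ball 0 1)) (hinv : LeftInvOn k g (ball 0 1))
    (hg0 : g 0 = 0) :
    0 ≤ Module.finrank ℝ E * Real.log ‖fderiv ℝ g 0‖ + Real.log ‖fderiv ℝ k 0‖ := by
  have hmul := hk.norm_fderiv_mul_of_leftInvOn hg isOpen_ball hinv (mem_ball_self one_pos)
  rw [hg0] at hmul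
  have hl := right_ne_zero_of_mul_eq_one hmul
  have hl' := left_ne_zero_of_mul_eq_one hmul
  have hleft : ContinuousAt (fun ε : ℝ => Module.finrank ℝ E * Real.log (1 - ε)) 0 :=
    continuousAt_const.mul (ContinuousAt.log (by fun_prop) (by simp))
  have hright : ContinuousAt (fun ε : ℝ => Module.finrank ℝ E * Real.log (‖fderiv ℝ g 0‖ + ε) +
      Real.log (‖fderiv ℝ k 0‖ + ε)) 0 :=
    (continuousAt_const.mul (ContinuousAt.log (by fun_prop) (by simpa using hl))).add
      (ContinuousAt.log (by fun_prop) (by simpa using hl'))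
  have hle := le_of_tendsto_of_tendsto (hleft.tendsto.mono_left nhdsWithin_le_nhds)
    (hright.tendsto.mono_left (nhdsWithin_le_nhds (s := Ioi 0))) ?_
  · simpa using hle
  · filter_upwards [Ioo_mem_nhdsGT one_pos] with ε hε
    exact log_le_of_norm_fderiv_lt hg hk hinv hg0 (sub_pos.2 hε.2) (sub_lt_self 1 hε.1)
      (lt_add_of_pos_right _ hε.1) (lt_add_of_pos_right _ hε.1)

lemma ConformalBijOn.norm_fderiv_zero_le_one (hdim : 2 ≤ Module.finrank ℝ E) {g : E → E}
    (hg : ConformalBijOn g (ball 0 1) (ball 0 1)) (hg0 : g 0 = 0) : ‖fderiv ℝ g 0‖ ≤ 1 := by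
  have hinv := hg.bijOn.invOn_invFunOn
  set k := Function.invFunOn g (ball 0 1)
  have hk := hg.symm isOpen_ball hinv
  have h0 : (0 : E) ∈ ball (0 : E) 1 := mem_ball_self one_pos
  have hk0 : k 0 = 0 := by simpa only [hg0] using hinv.1 h0
  have hmul := hk.norm_fderiv_mul_of_leftInvOn hg isOpen_ball hinv.1 h0
  rw [hg0] at hmul
  have hlog := log_norm_fderiv_nonneg hk hg hinv.2 hk0
  have hsum : Real.log ‖fderiv ℝ k 0‖ + Real.log ‖fderiv ℝ g 0‖ = 0 := by
    rw [← Real.log_mul (left_ne_zero_of_mul_eq_one hmul) (right_ne_zero_of_mul_eq_one hmul), hmul,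
      Real.log_one]
  have hN : (2 : ℝ) ≤ Module.finrank ℝ E := by exact_mod_cast hdim
  rw [← Real.log_nonpos_iff (norm_nonneg _)]
  nlinarith

end SchwarzAtZero

section HalfDistance

variable {E : Type*} [NormedAddCommGroup E] {δ : E → ℝ} {x y : E}

/-- A conformally invariant companion of the distance in `{x | 0 < δ x}`. If `δ` is the distance to
the boundary of a half-space, it is the distance from `x` to the mirror image of `y`. -/
noncomputable def conjDist (δ : E → ℝ) (x y : E) : ℝ :=
  √(‖x - y‖ ^ 2 + 4 * (δ x * δ y))

/-- If `1 / δ` is the density of the hyperbolic metric, this is `tanh (ρ / 2)` where `ρ` is the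
hyperbolic distance of `x` and `y`. -/
noncomputable def tanhHalfDist (δ : E → ℝ) (x y : E) : ℝ :=
  ‖x - y‖ / conjDist δ x y

/-- The weight `δ` on the unit ball for which `1 / δ` is the density of the hyperbolic metric. -/
noncomputable def ballWeight (x : E) : ℝ :=
  (1 - ‖x‖ ^ 2) / 2

lemma conjDist_nonneg (δ : E → ℝ) (x y : E) : 0 ≤ conjDist δ x y := Real.sqrt_nonneg _

lemma conjDist_comm (δ : E → ℝ) (x y : E) : conjDist δ x y = conjDist δ y x := by
  rw [conjDist, conjDist, norm_sub_rev, mul_comm (δ x)]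

lemma conjDist_sq (hx : 0 < δ x) (hy : 0 < δ y) :
    conjDist δ x y ^ 2 = ‖x - y‖ ^ 2 + 4 * (δ x * δ y) :=
  Real.sq_sqrt (by positivity)

lemma conjDist_pos (hx : 0 < δ x) (hy : 0 < δ y) : 0 < conjDist δ x y :=
  Real.sqrt_pos.2 (by positivity)

lemma setOf_ballWeight_pos : {x : E | 0 < ballWeight x} = ball 0 1 := by
  ext x
  rw [Set.mem_ofPred_eq, mem_ball_zero_iff, ballWeight, ← sq_lt_one_iff₀ (norm_nonneg x)]
  constructor <;> intro h <;> linarith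

lemma ballWeight_zero : ballWeight (0 : E) = 1 / 2 := by simp [ballWeight]

lemma conjDist_ballWeight_zero (x : E) : conjDist ballWeight 0 x = 1 := by
  rw [conjDist, zero_sub, norm_neg, ballWeight_zero, ballWeight, Real.sqrt_eq_one]
  ring

lemma tanhHalfDist_ballWeight_zero (x : E) : tanhHalfDist ballWeight 0 x = ‖x‖ := by
  rw [tanhHalfDist, conjDist_ballWeight_zero, zero_sub, norm_neg, div_one]

end HalfDistance

section MobiusBetween

variable {E : Type*} [NormedAddCommGroup E] [InnerProductSpace ℝ E]

/-- `T` is a conformal mapping of `{x | 0 < δ x}` onto `{x | 0 < δ' x}` that is an isometry of the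
metrics with densities `1 / δ` and `1 / δ'`, and that distorts Euclidean distances as Möbius
transformations do. -/
structure MobiusBetween (δ δ' : E → ℝ) (T : E → E) : Prop extends
    ConformalBijOn T {x | 0 < δ x} {x | 0 < δ' x} where
  weight_apply : ∀ p, 0 < δ p → δ' (T p) = ‖fderiv ℝ T p‖ * δ p
  norm_sub_sq : ∀ p q, 0 < δ p → 0 < δ q →
    ‖T p - T q‖ ^ 2 = ‖fderiv ℝ T p‖ * ‖fderiv ℝ T q‖ * ‖p - q‖ ^ 2

namespace MobiusBetween

variable {δ δ' δ'' : E → ℝ} {S T : E → E}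

lemma refl [Nontrivial E] (δ : E → ℝ) : MobiusBetween δ δ id where
  bijOn := bijOn_id _
  conformalAt p _ := conformalAt_id p
  weight_apply p _ := by simp
  norm_sub_sq p q _ _ := by simp

lemma comp [Nontrivial E] (hS : MobiusBetween δ' δ'' S) (hT : MobiusBetween δ δ' T) :
    MobiusBetween δ δ'' (S ∘ T) where
  toConformalBijOn := hS.toConformalBijOn.comp hT.toConformalBijOn
  weight_apply p hp := by
    rw [hS.norm_fderiv_comp hT.toConformalBijOn hp, Function.comp_apply,
      hS.weight_apply _ (hT.bijOn.mapsTo hp), hT.weight_apply p hp, mul_assoc]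
  norm_sub_sq p q hp hq := by
    rw [hS.norm_fderiv_comp hT.toConformalBijOn hp, hS.norm_fderiv_comp hT.toConformalBijOn hq,
      Function.comp_apply, Function.comp_apply,
      hS.norm_sub_sq _ _ (hT.bijOn.mapsTo hp) (hT.bijOn.mapsTo hq), hT.norm_sub_sq p q hp hq]
    ring

lemma tanhHalfDist_apply (hT : MobiusBetween δ δ' T) {p q : E} (hp : 0 < δ p) (hq : 0 < δ q) :
    tanhHalfDist δ' (T p) (T q) = tanhHalfDist δ p q := by
  have hpos {x : E} (hx : 0 < δ x) : 0 < ‖fderiv ℝ T x‖ :=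
    pos_of_mul_pos_left (hT.weight_apply x hx ▸ hT.bijOn.mapsTo hx) hx.le
  set κ := ‖fderiv ℝ T p‖ * ‖fderiv ℝ T q‖
  have hκ : 0 < κ := mul_pos (hpos hp) (hpos hq)
  have hdist : ‖T p - T q‖ = √κ * ‖p - q‖ := by
    rw [← Real.sqrt_sq (norm_nonneg (T p - T q)), hT.norm_sub_sq p q hp hq, Real.sqrt_mul hκ.le,
      Real.sqrt_sq (norm_nonneg _)]
  have hconj : conjDist δ' (T p) (T q) = √κ * conjDist δ p q := by
    rw [conjDist, conjDist, ← Real.sqrt_mul hκ.le, hT.norm_sub_sq p q hp hq, hT.weight_apply p hp,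
      hT.weight_apply q hq]
    congr 1
    ring
  rw [tanhHalfDist, tanhHalfDist, hdist, hconj, mul_div_mul_left _ _ (Real.sqrt_pos.2 hκ).ne']

end MobiusBetween

end MobiusBetween

section Inversion

open EuclideanGeometry

variable {E : Type*} [NormedAddCommGroup E] [InnerProductSpace ℝ E] {c p : E} {R : ℝ}

lemma conformalAt_inversion (hR : R ≠ 0) (hp : p ≠ c) : ConformalAt (inversion c R) p :=
  ⟨_, hasFDerivAt_inversion hp, (R / dist p c) ^ 2,
    pow_ne_zero 2 (div_ne_zero hR (dist_ne_zero.2 hp)),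
    (Submodule.span ℝ {p - c})ᗮ.reflection.toLinearIsometry, rfl⟩

lemma norm_fderiv_inversion [Nontrivial E] (hp : p ≠ c) :
    ‖fderiv ℝ (inversion c R) p‖ = (R / dist p c) ^ 2 := by
  have hrefl : ‖((Submodule.span ℝ {p - c})ᗮ.reflection : E →L[ℝ] E)‖ = 1 :=
    (Submodule.span ℝ {p - c})ᗮ.reflection.toLinearIsometry.norm_toContinuousLinearMap
  rw [(hasFDerivAt_inversion hp).fderiv, norm_smul, hrefl, mul_one,
    Real.norm_of_nonneg (sq_nonneg _)]

lemma norm_inversion_sq (hp : p ≠ c) : ‖inversion c R p‖ ^ 2 =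
    ‖c‖ ^ 2 + (R / dist p c) ^ 2 * (2 * inner ℝ c p - 2 * ‖c‖ ^ 2 + R ^ 2) := by
  have hd : 0 < dist p c := dist_pos.2 hp
  rw [inversion, vsub_eq_sub, vadd_eq_add, norm_add_sq_real, norm_smul,
    Real.norm_of_nonneg (by positivity), real_inner_smul_left, inner_sub_left,
    real_inner_self_eq_norm_sq, ← dist_eq_norm, real_inner_comm]
  field_simp
  ring

lemma weight_inversion_symm {δ δ' : E → ℝ} (hR : R ≠ 0)
    (h : ∀ p, p ≠ c → δ' (inversion c R p) = (R / dist p c) ^ 2 * δ p) (hp : p ≠ c) :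
    δ (inversion c R p) = (R / dist p c) ^ 2 * δ' p := by
  have hd : 0 < dist p c := dist_pos.2 hp
  have hinv := h (inversion c R p) ((inversion_eq_center hR).not.2 hp)
  rw [inversion_inversion c hR, dist_inversion_center] at hinv
  rw [hinv]
  field_simp

lemma mapsTo_inversion {δ δ' : E → ℝ} (hR : R ≠ 0) (hc : δ c ≤ 0)
    (h : ∀ p, p ≠ c → δ' (inversion c R p) = (R / dist p c) ^ 2 * δ p) :
    MapsTo (inversion c R) {x | 0 < δ x} {x | 0 < δ' x} := by
  intro p (hp : 0 < δ p)
  have hpc : p ≠ c := ne_of_apply_ne δ (hc.trans_lt hp).ne'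
  have hd : 0 < dist p c := dist_pos.2 hpc
  rw [Set.mem_ofPred_eq, h p hpc]
  positivity

lemma mobiusBetween_inversion [Nontrivial E] {δ δ' : E → ℝ} (hR : R ≠ 0) (hc : δ c ≤ 0)
    (hc' : δ' c ≤ 0) (h : ∀ p, p ≠ c → δ' (inversion c R p) = (R / dist p c) ^ 2 * δ p) :
    MobiusBetween δ δ' (inversion c R) := by
  have hne {p : E} (hp : 0 < δ p) : p ≠ c := ne_of_apply_ne δ (hc.trans_lt hp).ne'
  refine ⟨⟨?_, fun p hp => conformalAt_inversion hR (hne hp)⟩, fun p hp => ?_,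
    fun p q hp hq => ?_⟩
  · exact InvOn.bijOn ⟨fun x _ => inversion_inversion c hR x, fun x _ => inversion_inversion c hR x⟩
      (mapsTo_inversion hR hc h)
      (mapsTo_inversion hR hc' fun p hp => weight_inversion_symm hR h hp)
  · rw [norm_fderiv_inversion (hne hp), h p (hne hp)]
  · rw [norm_fderiv_inversion (hne hp), norm_fderiv_inversion (hne hq), ← dist_eq_norm,
      ← dist_eq_norm, dist_inversion_inversion (hne hp) (hne hq)]
    have hdp := dist_pos.2 (hne hp)
    have hdq := dist_pos.2 (hne hq)
    field_simp

lemma ballWeight_inversion (hR : R ^ 2 = ‖c‖ ^ 2 - 1) (hp : p ≠ c) :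
    ballWeight (inversion c R p) = (R / dist p c) ^ 2 * ballWeight p := by
  have hd : 0 < dist p c := dist_pos.2 hp
  have hcancel : (R / dist p c) ^ 2 * (‖p‖ ^ 2 - 2 * inner ℝ c p + ‖c‖ ^ 2) = R ^ 2 := by
    rw [real_inner_comm, ← norm_sub_sq_real, ← dist_eq_norm]
    field_simp
  rw [ballWeight, ballWeight, norm_inversion_sq hp]
  linear_combination (1 / 2) * hcancel + (1 / 2) * (1 - (R / dist p c) ^ 2) * hR

lemma inversion_zero (c : E) (R : ℝ) : inversion c R 0 = (1 - R ^ 2 / ‖c‖ ^ 2) • c := by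
  rw [inversion, vsub_eq_sub, vadd_eq_add, dist_zero_left, zero_sub, div_pow]
  module

lemma exists_mobiusBetween_ballWeight_swap [Nontrivial E] {z : E} (hz : 0 < ballWeight z) :
    ∃ M : E → E, MobiusBetween ballWeight ballWeight M ∧ M 0 = z ∧ M z = 0 := by
  rcases eq_or_ne z 0 with rfl | hz0
  · exact ⟨id, .refl _, rfl, rfl⟩
  have : 0 < ‖z‖ := norm_pos_iff.2 hz0
  have hz1 : ‖z‖ ^ 2 < 1 := by linarith [ballWeight.eq_1 z]
  set c : E := (‖z‖ ^ 2)⁻¹ • z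
  have hc_sq : ‖c‖ ^ 2 = (‖z‖ ^ 2)⁻¹ := by
    rw [norm_smul, Real.norm_of_nonneg (by positivity)]
    field_simp
  have hc1 : 1 < ‖c‖ ^ 2 := hc_sq ▸ (one_lt_inv₀ (by positivity)).2 hz1
  have hR : √(‖c‖ ^ 2 - 1) ^ 2 = ‖c‖ ^ 2 - 1 := Real.sq_sqrt (by linarith)
  have hR0 : √(‖c‖ ^ 2 - 1) ≠ 0 := (Real.sqrt_pos.2 (by linarith)).ne'
  have hcw : ballWeight c ≤ 0 := by
    rw [ballWeight]
    linarith
  have hM0 : inversion c √(‖c‖ ^ 2 - 1) 0 = z := by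
    rw [inversion_zero, hR, hc_sq, smul_smul]
    convert one_smul ℝ z
    field_simp
    ring
  refine ⟨_, mobiusBetween_inversion hR0 hcw hcw fun p hp => ballWeight_inversion hR hp, hM0, ?_⟩
  conv_lhs => rw [← hM0]
  exact inversion_inversion c hR0 0

variable {e : E}

lemma ballWeight_inversion_neg (he : ‖e‖ = 1) (hp : p ≠ -e) :
    ballWeight (inversion (-e) √2 p) = (√2 / dist p (-e)) ^ 2 * inner ℝ e p := by
  rw [ballWeight, norm_inversion_sq hp, Real.sq_sqrt zero_le_two, norm_neg, he, inner_neg_left]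
  ring

lemma mobiusBetween_inner_ballWeight [Nontrivial E] (he : ‖e‖ = 1) :
    MobiusBetween (inner ℝ e) ballWeight (inversion (-e) √2) ∧
      MobiusBetween ballWeight (inner ℝ e) (inversion (-e) √2) := by
  have hR : √2 ≠ 0 := by positivity
  have hinner : inner ℝ e (-e) ≤ 0 := by simp
  have hball : ballWeight (-e) ≤ 0 := by simp [ballWeight, he]
  have hw (p : E) (hp : p ≠ -e) := ballWeight_inversion_neg he hp
  exact ⟨mobiusBetween_inversion hR hinner hball hw,
    mobiusBetween_inversion hR hball hinner fun p hp => weight_inversion_symm hR hw hp⟩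

end Inversion

section Boundary

variable {E : Type*} [NormedAddCommGroup E] [InnerProductSpace ℝ E]

/-- `1 / δ` is the density of the hyperbolic metric of `{x | 0 < δ x}`, as witnessed by Möbius
transformations from and onto the unit ball, and `conjDist δ` controls the distances of two points
to the boundary. -/
structure IsHyperbolicWeight (δ : E → ℝ) : Prop where
  exists_mobiusBetween_ballWeight_left : ∃ A, MobiusBetween ballWeight δ A
  exists_mobiusBetween_ballWeight_right : ∃ C, MobiusBetween δ ballWeight C
  conjDist_le : ∀ x y, 0 < δ x → 0 < δ y → ∀ z ∈ frontier {p | 0 < δ p},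
    conjDist δ x y ≤ dist x z + dist y z
  exists_dist_le_conjDist : ∀ x y, 0 < δ x → 0 < δ y → ∃ z ∈ frontier {p | 0 < δ p},
    dist x z ≤ conjDist δ x y ∧ dist y z ≤ conjDist δ x y

section HalfSpace

variable {e x y z : E}

lemma frontier_setOf_inner_pos (he : e ≠ 0) :
    frontier {x : E | 0 < inner ℝ e x} = {x | inner ℝ e x = 0} := by
  have hne : innerSL ℝ e ≠ 0 := fun h => he (inner_self_eq_zero.1 (DFunLike.congr_fun h e))
  have hfrontier := ((innerSL ℝ e).isOpenMap_of_ne_zero hne).preimage_frontier_eq_frontier_preimage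
    (innerSL ℝ e).continuous (Ioi 0)
  rw [frontier_Ioi] at hfrontier
  exact hfrontier.symm

lemma inner_sub_two_smul (he : ‖e‖ = 1) (y : E) :
    inner ℝ e (y - (2 * inner ℝ e y) • e) = -inner ℝ e y := by
  rw [inner_sub_right, inner_smul_right, real_inner_self_eq_norm_sq, he]
  ring

lemma norm_sub_sq_sub_two_smul (he : ‖e‖ = 1) (x y : E) :
    ‖x - (y - (2 * inner ℝ e y) • e)‖ ^ 2 = ‖x - y‖ ^ 2 + 4 * (inner ℝ e x * inner ℝ e y) := by
  rw [← sub_add, norm_add_sq_real, norm_smul, inner_smul_right, real_inner_comm e, inner_sub_right,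
    he, mul_one, Real.norm_eq_abs, sq_abs]
  ring

lemma conjDist_inner (he : ‖e‖ = 1) (x y : E) :
    conjDist (inner ℝ e) x y = dist x (y - (2 * inner ℝ e y) • e) := by
  rw [conjDist, ← norm_sub_sq_sub_two_smul he, Real.sqrt_sq (norm_nonneg _), dist_eq_norm]

lemma dist_sub_two_smul_of_inner_eq_zero (he : ‖e‖ = 1) (hz : inner ℝ e z = 0) (y : E) :
    dist (y - (2 * inner ℝ e y) • e) z = dist y z := by
  rw [dist_comm, ← conjDist_inner he, conjDist, hz, zero_mul, mul_zero, add_zero,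
    Real.sqrt_sq (norm_nonneg _), dist_comm, dist_eq_norm]

lemma exists_inner_eq_zero_dist_le (hx : 0 < inner ℝ e x) (hy : inner ℝ e y < 0) :
    ∃ z, inner ℝ e z = 0 ∧ dist x z ≤ dist x y ∧ dist y z ≤ dist x y := by
  obtain ⟨t, ht, hzero⟩ := intermediate_value_Icc' (zero_le_one' ℝ)
    (f := fun t => inner ℝ e (AffineMap.lineMap x y t))
    (Continuous.continuousOn (by fun_prop)) (⟨by simpa using hy.le, by simpa using hx.le⟩)
  refine ⟨AffineMap.lineMap x y t, hzero, ?_, ?_⟩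
  · rw [dist_left_lineMap, Real.norm_of_nonneg ht.1]
    exact mul_le_of_le_one_left dist_nonneg ht.2
  · rw [dist_right_lineMap, Real.norm_of_nonneg (sub_nonneg.2 ht.2)]
    exact mul_le_of_le_one_left dist_nonneg (sub_le_self 1 ht.1)

lemma isHyperbolicWeight_inner [Nontrivial E] (he : ‖e‖ = 1) :
    IsHyperbolicWeight (inner ℝ e : E → ℝ) where
  exists_mobiusBetween_ballWeight_left := ⟨_, (mobiusBetween_inner_ballWeight he).2⟩
  exists_mobiusBetween_ballWeight_right := ⟨_, (mobiusBetween_inner_ballWeight he).1⟩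
  conjDist_le x y _ _ z hz := by
    rw [frontier_setOf_inner_pos (norm_ne_zero_iff.1 (he ▸ one_ne_zero))] at hz
    rw [conjDist_inner he, ← dist_sub_two_smul_of_inner_eq_zero he hz y]
    exact dist_triangle_right _ _ _
  exists_dist_le_conjDist x y hx hy := by
    obtain ⟨z, hz, hxz, hyz⟩ := exists_inner_eq_zero_dist_le hx
      ((inner_sub_two_smul he y).trans_lt (neg_lt_zero.2 hy))
    rw [dist_sub_two_smul_of_inner_eq_zero he hz] at hyz
    rw [frontier_setOf_inner_pos (norm_ne_zero_iff.1 (he ▸ one_ne_zero)), conjDist_inner he]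
    exact ⟨z, hz, hxz, hyz⟩

end HalfSpace

section Ball

variable {x y z : E}

lemma conjDist_ballWeight_sq (hx : 0 < ballWeight x) (hy : 0 < ballWeight y) :
    conjDist ballWeight x y ^ 2 = 1 - 2 * inner ℝ x y + ‖x‖ ^ 2 * ‖y‖ ^ 2 := by
  rw [conjDist_sq hx hy, norm_sub_sq_real, ballWeight, ballWeight]
  ring

lemma norm_smul_sub_inv_smul_sq (hx : x ≠ 0) (y : E) :
    ‖‖x‖ • y - ‖x‖⁻¹ • x‖ ^ 2 = 1 - 2 * inner ℝ x y + ‖x‖ ^ 2 * ‖y‖ ^ 2 := by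
  have : 0 < ‖x‖ := norm_pos_iff.2 hx
  rw [norm_sub_sq_real, norm_smul, norm_smul, norm_inv, norm_norm, real_inner_smul_left,
    real_inner_smul_right, real_inner_comm]
  field_simp
  ring

lemma conjDist_ballWeight_eq (hx0 : x ≠ 0) (hx : 0 < ballWeight x) (hy : 0 < ballWeight y) :
    conjDist ballWeight x y = ‖‖x‖ • y - ‖x‖⁻¹ • x‖ := by
  rw [← sq_eq_sq₀ (conjDist_nonneg _ _ _) (norm_nonneg _), conjDist_ballWeight_sq hx hy,
    norm_smul_sub_inv_smul_sq hx0]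

lemma norm_smul_sub_inv_smul_of_norm_eq_one (hx : x ≠ 0) (hz : ‖z‖ = 1) :
    ‖‖x‖ • z - ‖x‖⁻¹ • x‖ = ‖x - z‖ := by
  rw [← sq_eq_sq₀ (norm_nonneg _) (norm_nonneg _), norm_smul_sub_inv_smul_sq hx, norm_sub_sq_real,
    hz]
  ring

lemma conjDist_ballWeight_le (hx : 0 < ballWeight x) (hy : 0 < ballWeight y) (hz : ‖z‖ = 1) :
    conjDist ballWeight x y ≤ dist x z + dist y z := by
  rcases eq_or_ne x 0 with rfl | hx0
  · rw [conjDist_ballWeight_zero, dist_zero_left, hz]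
    exact le_add_of_nonneg_right dist_nonneg
  have hx1 : ‖x‖ ≤ 1 := (mem_ball_zero_iff.1 (setOf_ballWeight_pos.subset hx)).le
  rw [conjDist_ballWeight_eq hx0 hx hy, dist_eq_norm, dist_eq_norm]
  calc ‖‖x‖ • y - ‖x‖⁻¹ • x‖ = ‖‖x‖ • z - ‖x‖⁻¹ • x + ‖x‖ • (y - z)‖ := by
        congr 1
        module
    _ ≤ ‖‖x‖ • z - ‖x‖⁻¹ • x‖ + ‖‖x‖ • (y - z)‖ := norm_add_le _ _
    _ = ‖x - z‖ + ‖x‖ * ‖y - z‖ := by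
        rw [norm_smul_sub_inv_smul_of_norm_eq_one hx0 hz, norm_smul, norm_norm]
    _ ≤ ‖x - z‖ + ‖y - z‖ := by
        gcongr
        exact mul_le_of_le_one_left (norm_nonneg _) hx1

lemma exists_ne_zero_inner_eq_zero_inner_nonneg (hdim : 2 ≤ Module.finrank ℝ E) (x y : E) :
    ∃ v : E, v ≠ 0 ∧ inner ℝ x v = 0 ∧ 0 ≤ inner ℝ y v := by
  have hspan : (ℝ ∙ x)ᗮ ≠ ⊥ := by
    rw [Ne, Submodule.orthogonal_eq_bot_iff]
    intro htop
    have hle : Module.finrank ℝ (ℝ ∙ x) ≤ 1 := (finrank_span_le_card _).trans (by simp)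
    rw [htop, finrank_top] at hle
    omega
  obtain ⟨v, hv, hv0⟩ := Submodule.exists_mem_ne_zero_of_ne_bot hspan
  have hxv : inner ℝ x v = 0 := Submodule.mem_orthogonal_singleton_iff_inner_right.1 hv
  rcases le_total 0 (inner ℝ y v) with hyv | hyv
  · exact ⟨v, hv0, hxv, hyv⟩
  · exact ⟨-v, neg_ne_zero.2 hv0, by rw [inner_neg_right, hxv, neg_zero],
      by rwa [inner_neg_right, Left.nonneg_neg_iff]⟩

lemma exists_nonneg_norm_add_smul_eq_one {p v : E} (hp : ‖p‖ ≤ 1) (hv : v ≠ 0) :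
    ∃ t : ℝ, 0 ≤ t ∧ ‖p + t • v‖ = 1 := by
  have hvpos : 0 < ‖v‖ := norm_pos_iff.2 hv
  have hend : 1 ≤ ‖p + (2 / ‖v‖) • v‖ := by
    have htri := norm_sub_le (p + (2 / ‖v‖) • v) p
    rw [add_sub_cancel_left, norm_smul, Real.norm_of_nonneg (by positivity),
      div_mul_cancel₀ _ hvpos.ne'] at htri
    linarith
  obtain ⟨t, ht, htv⟩ := intermediate_value_Icc (f := fun t : ℝ => ‖p + t • v‖)
    (a := 0) (b := 2 / ‖v‖) (by positivity) (by fun_prop) ⟨by simpa using hp, hend⟩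
  exact ⟨t, ht.1, htv⟩

lemma exists_norm_eq_one_inner_eq_inner_le (hdim : 2 ≤ Module.finrank ℝ E) (x y : E) {p : E}
    (hp : ‖p‖ ≤ 1) : ∃ z : E, ‖z‖ = 1 ∧ inner ℝ x z = inner ℝ x p ∧ inner ℝ y p ≤ inner ℝ y z := by
  obtain ⟨v, hv0, hxv, hyv⟩ := exists_ne_zero_inner_eq_zero_inner_nonneg hdim x y
  obtain ⟨t, ht, hz⟩ := exists_nonneg_norm_add_smul_eq_one hp hv0
  refine ⟨p + t • v, hz, ?_, ?_⟩
  · rw [inner_add_right, inner_smul_right, hxv, mul_zero, add_zero]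
  · rw [inner_add_right, inner_smul_right]
    exact le_add_of_nonneg_right (mul_nonneg ht hyv)

-- The sphere point `z` is chosen with `⟪x, z⟫ = ⟪x, y + ballWeight y • x⟫`, which is equivalent to
-- `dist x z = conjDist ballWeight x y`.
lemma exists_norm_eq_one_dist_le_conjDist (hdim : 2 ≤ Module.finrank ℝ E)
    (hx : 0 < ballWeight x) (hy : 0 < ballWeight y) (hxy : ‖x‖ ≤ ‖y‖) :
    ∃ z : E, ‖z‖ = 1 ∧ dist x z ≤ conjDist ballWeight x y ∧
      dist y z ≤ conjDist ballWeight x y := by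
  have hy1 : ‖y‖ < 1 := mem_ball_zero_iff.1 (setOf_ballWeight_pos.subset hy)
  have hp : ‖y + ballWeight y • x‖ ≤ 1 := by
    calc ‖y + ballWeight y • x‖ ≤ ‖y‖ + ballWeight y * ‖x‖ := by
          grw [norm_add_le, norm_smul, Real.norm_of_nonneg hy.le]
      _ ≤ ‖y‖ + ballWeight y * 1 := by gcongr; exact hxy.trans hy1.le
      _ ≤ 1 := by rw [ballWeight]; nlinarith [sq_nonneg (1 - ‖y‖)]
  obtain ⟨z, hz, hxz, hyz⟩ := exists_norm_eq_one_inner_eq_inner_le hdim x y hp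
  rw [inner_add_right, inner_smul_right, real_inner_self_eq_norm_sq, ballWeight] at hxz hyz
  rw [real_inner_comm] at hyz
  have hdist (w : E) (hw : ‖w - z‖ ^ 2 ≤ conjDist ballWeight x y ^ 2) :
      dist w z ≤ conjDist ballWeight x y := by
    rw [dist_eq_norm]
    exact le_of_sq_le_sq hw (conjDist_nonneg _ _ _)
  refine ⟨z, hz, hdist x (le_of_eq ?_), hdist y ?_⟩
  · rw [conjDist_ballWeight_sq hx hy, norm_sub_sq_real, hz, hxz]
    ring
  · rw [conjDist_ballWeight_sq hx hy, norm_sub_sq_real, hz]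
    have hinner : (1 + ‖y‖ ^ 2) * inner ℝ x y ≤ (1 + ‖y‖ ^ 2) * (‖x‖ * ‖y‖) := by
      gcongr
      exact real_inner_le_norm x y
    have hgap : 0 ≤ ‖y‖ * ((‖y‖ - ‖x‖) * (1 - ‖x‖ * ‖y‖)) :=
      mul_nonneg (norm_nonneg y) (mul_nonneg (sub_nonneg.2 hxy)
        (sub_nonneg.2 (mul_le_one₀ (hxy.trans hy1.le) (norm_nonneg y) hy1.le)))
    nlinarith

lemma isHyperbolicWeight_ballWeight (hdim : 2 ≤ Module.finrank ℝ E) :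
    IsHyperbolicWeight (ballWeight : E → ℝ) := by
  have : Nontrivial E := Module.nontrivial_of_finrank_pos (R := ℝ) (by omega)
  have hfrontier : frontier {x : E | 0 < ballWeight x} = sphere 0 1 := by
    rw [setOf_ballWeight_pos, frontier_ball _ one_ne_zero]
  refine ⟨⟨id, .refl _⟩, ⟨id, .refl _⟩, fun x y hx hy z hz => ?_, fun x y hx hy => ?_⟩
  · exact conjDist_ballWeight_le hx hy (mem_sphere_zero_iff_norm.1 (hfrontier ▸ hz))
  · simp only [hfrontier, mem_sphere_zero_iff_norm]
    rcases le_total ‖x‖ ‖y‖ with hxy | hxy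
    · exact exists_norm_eq_one_dist_le_conjDist hdim hx hy hxy
    · obtain ⟨z, hz, hyz, hxz⟩ := exists_norm_eq_one_dist_le_conjDist hdim hy hx hxy
      rw [conjDist_comm]
      exact ⟨z, hz, hxz, hyz⟩

end Ball

end Boundary

section SchwarzPick

lemma apply_le_self_of_hasDerivAt_mul_le {φ φ' : ℝ → ℝ} {r : ℝ} (hr0 : 0 ≤ r) (hr1 : r < 1)
    (hφ0 : φ 0 = 0) (hφ1 : ∀ t ∈ Icc 0 r, |φ t| < 1)
    (hderiv : ∀ t ∈ Icc 0 r, HasDerivAt φ (φ' t) t)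
    (hle : ∀ t ∈ Icc 0 r, φ' t * (1 - t ^ 2) ≤ 1 - φ t ^ 2) : φ r ≤ r := by
  set u : ℝ → ℝ := fun t => (φ t - t) / (1 - t * φ t)
  have hden (t : ℝ) (ht : t ∈ Icc 0 r) : 0 < 1 - t * φ t := by
    have hlt : t * |φ t| < 1 := mul_lt_one_of_nonneg_of_lt_one_right (ht.2.trans hr1.le)
      (abs_nonneg _) (hφ1 t ht)
    linarith [mul_le_mul_of_nonneg_left (le_abs_self (φ t)) ht.1]
  have hu (t : ℝ) (ht : t ∈ Icc 0 r) :
      HasDerivAt u ((φ' t * (1 - t ^ 2) - (1 - φ t ^ 2)) / (1 - t * φ t) ^ 2) t := by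
    refine (((hderiv t ht).sub (hasDerivAt_id t)).div
      (((hasDerivAt_id t).mul (hderiv t ht)).const_sub 1) (hden t ht).ne').congr_deriv ?_
    simp only [Pi.sub_apply, Pi.mul_apply, id_eq]
    ring
  have hanti : AntitoneOn u (Icc 0 r) := antitoneOn_of_hasDerivWithinAt_nonpos (convex_Icc 0 r)
    (fun t ht => (hu t ht).continuousAt.continuousWithinAt)
    (fun t ht => (hu t (interior_subset ht)).hasDerivWithinAt)
    fun t ht => div_nonpos_of_nonpos_of_nonneg (sub_nonpos.2 (hle t (interior_subset ht)))
      (sq_nonneg _)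
  have hur : u r ≤ 0 := by
    simpa [u, hφ0] using hanti (left_mem_Icc.2 hr0) (right_mem_Icc.2 hr0) hr0
  have hnum := (div_le_iff₀ (hden r (right_mem_Icc.2 hr0))).1 hur
  linarith

variable {E : Type*} [NormedAddCommGroup E] [InnerProductSpace ℝ E]

lemma inner_apply_smul_le {g : E → E} (hmaps : MapsTo g (ball 0 1) (ball 0 1)) (hg0 : g 0 = 0)
    (hg : ∀ p ∈ ball (0 : E) 1, DifferentiableAt ℝ g p)
    (hpick : ∀ p ∈ ball (0 : E) 1, ‖fderiv ℝ g p‖ * ballWeight p ≤ ballWeight (g p)) {θ e : E}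
    (hθ : ‖θ‖ = 1) (he : ‖e‖ = 1) {r : ℝ} (hr0 : 0 ≤ r) (hr1 : r < 1) :
    inner ℝ e (g (r • θ)) ≤ r := by
  have hnorm {t : ℝ} (ht : t ∈ Icc 0 r) : ‖t • θ‖ = t := by
    rw [norm_smul, hθ, mul_one, Real.norm_of_nonneg ht.1]
  have hmem {t : ℝ} (ht : t ∈ Icc 0 r) : t • θ ∈ ball (0 : E) 1 :=
    mem_ball_zero_iff.2 ((hnorm ht).trans_lt (ht.2.trans_lt hr1))
  have habs (v : E) : |inner ℝ e v| ≤ ‖v‖ := by simpa [he] using abs_real_inner_le_norm e v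
  refine apply_le_self_of_hasDerivAt_mul_le (φ := fun t => inner ℝ e (g (t • θ)))
    (φ' := fun t => inner ℝ e (fderiv ℝ g (t • θ) θ)) hr0 hr1 (by simp [hg0])
    (fun t ht => (habs _).trans_lt (mem_ball_zero_iff.1 (hmaps (hmem ht)))) (fun t ht => ?_)
    fun t ht => ?_
  · have hray : HasDerivAt (fun s : ℝ => s • θ) θ t := by
      simpa using (hasDerivAt_id t).smul_const θ
    exact (innerSL ℝ e).hasFDerivAt.comp_hasDerivAt t
      ((hg _ (hmem ht)).hasFDerivAt.comp_hasDerivAt t hray)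
  · have ht1 : 0 ≤ 1 - t ^ 2 := by nlinarith [ht.1, ht.2]
    have hp := hpick _ (hmem ht)
    rw [ballWeight, ballWeight, hnorm ht] at hp
    calc inner ℝ e (fderiv ℝ g (t • θ) θ) * (1 - t ^ 2)
        ≤ ‖fderiv ℝ g (t • θ)‖ * (1 - t ^ 2) := by
          gcongr
          exact (le_abs_self _).trans ((habs _).trans (by
            simpa [hθ] using (fderiv ℝ g (t • θ)).le_opNorm θ))
      _ ≤ 1 - ‖g (t • θ)‖ ^ 2 := by linarith
      _ ≤ 1 - inner ℝ e (g (t • θ)) ^ 2 := by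
          rw [← sq_abs (inner ℝ e _)]
          gcongr
          exact habs _

lemma norm_apply_le_of_norm_fderiv_mul_ballWeight_le {g : E → E}
    (hmaps : MapsTo g (ball 0 1) (ball 0 1)) (hg0 : g 0 = 0)
    (hg : ∀ p ∈ ball (0 : E) 1, DifferentiableAt ℝ g p)
    (hpick : ∀ p ∈ ball (0 : E) 1, ‖fderiv ℝ g p‖ * ballWeight p ≤ ballWeight (g p)) {z : E}
    (hz : ‖z‖ < 1) : ‖g z‖ ≤ ‖z‖ := by
  rcases eq_or_ne (g z) 0 with hgz | hgz
  · rw [hgz, norm_zero]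
    exact norm_nonneg z
  have hz0 : z ≠ 0 := by
    rintro rfl
    exact hgz hg0
  have hunit {v : E} (hv : v ≠ 0) : ‖‖v‖⁻¹ • v‖ = 1 := by
    simpa using norm_smul_inv_norm (𝕜 := ℝ) hv
  have hle := inner_apply_smul_le hmaps hg0 hg hpick (hunit hz0) (hunit hgz) (norm_nonneg z) hz
  rwa [smul_inv_smul₀ (norm_ne_zero_iff.2 hz0), real_inner_smul_left, real_inner_self_eq_norm_sq,
    sq, inv_mul_cancel_left₀ (norm_ne_zero_iff.2 hgz)] at hle

namespace IsHyperbolicWeight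

variable {δ δ' : E → ℝ} {f : E → E} {x y z : E}

section Normalization

variable [Nontrivial E]

lemma exists_mobiusBetween_zero (hδ : IsHyperbolicWeight δ) (hz : 0 < δ z) :
    ∃ M, MobiusBetween ballWeight δ M ∧ M 0 = z := by
  obtain ⟨A, hA⟩ := hδ.exists_mobiusBetween_ballWeight_left
  obtain ⟨w, hw, rfl⟩ := hA.bijOn.surjOn hz
  obtain ⟨S, hS, hS0, -⟩ := exists_mobiusBetween_ballWeight_swap hw
  exact ⟨A ∘ S, hA.comp hS, congrArg A hS0⟩

lemma exists_mobiusBetween_eq_zero (hδ : IsHyperbolicWeight δ) (hz : 0 < δ z) :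
    ∃ K, MobiusBetween δ ballWeight K ∧ K z = 0 := by
  obtain ⟨C, hC⟩ := hδ.exists_mobiusBetween_ballWeight_right
  obtain ⟨S, hS, -, hS0⟩ := exists_mobiusBetween_ballWeight_swap (hC.bijOn.mapsTo hz)
  exact ⟨S ∘ C, hS.comp hC, hS0⟩

lemma exists_normalization (hδ : IsHyperbolicWeight δ) (hδ' : IsHyperbolicWeight δ')
    (hf : ConformalBijOn f {p | 0 < δ p} {p | 0 < δ' p}) (hz : 0 < δ z) :
    ∃ M K, MobiusBetween ballWeight δ M ∧ MobiusBetween δ' ballWeight K ∧ M 0 = z ∧ K (f z) = 0 ∧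
      ConformalBijOn (K ∘ f ∘ M) (ball 0 1) (ball 0 1) := by
  obtain ⟨M, hM, hM0⟩ := hδ.exists_mobiusBetween_zero hz
  obtain ⟨K, hK, hK0⟩ := hδ'.exists_mobiusBetween_eq_zero (hf.bijOn.mapsTo hz)
  refine ⟨M, K, hM, hK, hM0, hK0, ?_⟩
  rw [← setOf_ballWeight_pos]
  exact hK.toConformalBijOn.comp (hf.comp hM.toConformalBijOn)

end Normalization

variable [FiniteDimensional ℝ E]

lemma norm_fderiv_mul_le (hdim : 2 ≤ Module.finrank ℝ E) (hδ : IsHyperbolicWeight δ)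
    (hδ' : IsHyperbolicWeight δ') (hf : ConformalBijOn f {p | 0 < δ p} {p | 0 < δ' p})
    (hz : 0 < δ z) : ‖fderiv ℝ f z‖ * δ z ≤ δ' (f z) := by
  have : Nontrivial E := Module.nontrivial_of_finrank_pos (R := ℝ) (by omega)
  have hfz : 0 < δ' (f z) := hf.bijOn.mapsTo hz
  obtain ⟨M, K, hM, hK, rfl, hK0, hg⟩ := hδ.exists_normalization hδ' hf hz
  have h0 : (0 : ℝ) < ballWeight (0 : E) := by norm_num [ballWeight_zero]
  have hschwarz := hg.norm_fderiv_zero_le_one hdim (by simp [hK0])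
  rw [hK.norm_fderiv_comp (hf.comp hM.toConformalBijOn) h0,
    hf.norm_fderiv_comp hM.toConformalBijOn h0, Function.comp_apply] at hschwarz
  have hKw := hK.weight_apply _ hfz
  rw [hK0, ballWeight_zero] at hKw
  calc ‖fderiv ℝ f (M 0)‖ * δ (M 0) = ‖fderiv ℝ f (M 0)‖ * ‖fderiv ℝ M 0‖ * (1 / 2) := by
        rw [hM.weight_apply 0 h0, ballWeight_zero, mul_assoc]
    _ = ‖fderiv ℝ K (f (M 0))‖ * (‖fderiv ℝ f (M 0)‖ * ‖fderiv ℝ M 0‖) * δ' (f (M 0)) := by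
        rw [hKw]
        ring
    _ ≤ δ' (f (M 0)) := mul_le_of_le_one_left hfz.le hschwarz

lemma tanhHalfDist_apply_le (hdim : 2 ≤ Module.finrank ℝ E) (hδ : IsHyperbolicWeight δ)
    (hδ' : IsHyperbolicWeight δ') (hf : ConformalBijOn f {p | 0 < δ p} {p | 0 < δ' p})
    (hx : 0 < δ x) (hy : 0 < δ y) : tanhHalfDist δ' (f x) (f y) ≤ tanhHalfDist δ x y := by
  have : Nontrivial E := Module.nontrivial_of_finrank_pos (R := ℝ) (by omega)
  obtain ⟨M, K, hM, hK, rfl, hK0, hg⟩ := hδ.exists_normalization hδ' hf hx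
  obtain ⟨w, hw, rfl⟩ := hM.bijOn.surjOn hy
  have h0 : (0 : ℝ) < ballWeight (0 : E) := by norm_num [ballWeight_zero]
  have hball := isHyperbolicWeight_ballWeight hdim (E := E)
  have hpick (p : E) (hp : p ∈ ball (0 : E) 1) := hball.norm_fderiv_mul_le hdim hball
    (setOf_ballWeight_pos (E := E) ▸ hg) (setOf_ballWeight_pos.superset hp)
  calc tanhHalfDist δ' (f (M 0)) (f (M w)) = ‖K (f (M w))‖ := by
        rw [← hK.tanhHalfDist_apply (hf.bijOn.mapsTo hx) (hf.bijOn.mapsTo hy), hK0,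
          tanhHalfDist_ballWeight_zero]
    _ ≤ ‖w‖ := norm_apply_le_of_norm_fderiv_mul_ballWeight_le hg.bijOn.mapsTo (by simp [hK0])
        (fun p hp => hg.differentiableAt hp) hpick
        (mem_ball_zero_iff.1 (setOf_ballWeight_pos.subset hw))
    _ = tanhHalfDist δ (M 0) (M w) := by
        rw [hM.tanhHalfDist_apply h0 hw, tanhHalfDist_ballWeight_zero]

end IsHyperbolicWeight

end SchwarzPick

section BoundaryMaxDistance

variable {E : Type*} [NormedAddCommGroup E] [InnerProductSpace ℝ E]

/-- The denominator `inf_{z ∈ ∂G} max{|x - z|, |y - z|}` of `c̃_G`. -/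
noncomputable def boundaryMaxDist (G : Set E) (x y : E) : ℝ :=
  sInf ((fun z => max (dist x z) (dist y z)) '' frontier G)

namespace IsHyperbolicWeight

variable {δ : E → ℝ} {x y : E}

lemma conjDist_half_le_boundaryMaxDist (hδ : IsHyperbolicWeight δ) (hx : 0 < δ x) (hy : 0 < δ y) :
    conjDist δ x y / 2 ≤ boundaryMaxDist {p | 0 < δ p} x y := by
  obtain ⟨z, hz, -⟩ := hδ.exists_dist_le_conjDist x y hx hy
  refine le_csInf ⟨_, mem_image_of_mem _ hz⟩ ?_
  rintro _ ⟨w, hw, rfl⟩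
  linarith [hδ.conjDist_le x y hx hy w hw, le_max_left (dist x w) (dist y w),
    le_max_right (dist x w) (dist y w)]

lemma boundaryMaxDist_le_conjDist (hδ : IsHyperbolicWeight δ) (hx : 0 < δ x) (hy : 0 < δ y) :
    boundaryMaxDist {p | 0 < δ p} x y ≤ conjDist δ x y := by
  obtain ⟨z, hz, hxz, hyz⟩ := hδ.exists_dist_le_conjDist x y hx hy
  refine (csInf_le ⟨0, ?_⟩ (mem_image_of_mem _ hz)).trans (max_le hxz hyz)
  rintro _ ⟨w, -, rfl⟩
  exact le_max_of_le_left dist_nonneg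

lemma dist_div_boundaryMaxDist_le (hδ : IsHyperbolicWeight δ) (hx : 0 < δ x) (hy : 0 < δ y) :
    dist x y / boundaryMaxDist {p | 0 < δ p} x y ≤ 2 * tanhHalfDist δ x y := by
  have hconj := conjDist_pos hx hy
  calc dist x y / boundaryMaxDist {p | 0 < δ p} x y ≤ dist x y / (conjDist δ x y / 2) := by
        gcongr
        exact hδ.conjDist_half_le_boundaryMaxDist hx hy
    _ = 2 * tanhHalfDist δ x y := by
        rw [tanhHalfDist, dist_eq_norm]
        field_simp

lemma tanhHalfDist_le (hδ : IsHyperbolicWeight δ) (hx : 0 < δ x) (hy : 0 < δ y) :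
    tanhHalfDist δ x y ≤ dist x y / boundaryMaxDist {p | 0 < δ p} x y := by
  have hpos : 0 < boundaryMaxDist {p | 0 < δ p} x y :=
    (half_pos (conjDist_pos hx hy)).trans_le (hδ.conjDist_half_le_boundaryMaxDist hx hy)
  rw [tanhHalfDist, ← dist_eq_norm]
  gcongr
  exact hδ.boundaryMaxDist_le_conjDist hx hy

end IsHyperbolicWeight

end BoundaryMaxDistance

lemma exists_isHyperbolicWeight {E : Type*} [NormedAddCommGroup E] [InnerProductSpace ℝ E]
    (hdim : 2 ≤ Module.finrank ℝ E) {G : Set E}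
    (hG : (∃ e : E, ‖e‖ = 1 ∧ G = {x | 0 < inner ℝ e x}) ∨ G = ball 0 1) :
    ∃ δ : E → ℝ, IsHyperbolicWeight δ ∧ G = {x | 0 < δ x} := by
  have : Nontrivial E := Module.nontrivial_of_finrank_pos (R := ℝ) (by omega)
  rcases hG with ⟨e, he, rfl⟩ | rfl
  · exact ⟨_, isHyperbolicWeight_inner he, rfl⟩
  · exact ⟨_, isHyperbolicWeight_ballWeight hdim, setOf_ballWeight_pos.symm⟩

theorem stmt_16_general {E : Type*} [NormedAddCommGroup E] [InnerProductSpace ℝ E]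
    (hdim : 2 ≤ Module.finrank ℝ E) {G G' : Set E}
    (hG : (∃ e : E, ‖e‖ = 1 ∧ G = {x | 0 < inner ℝ e x}) ∨ G = ball 0 1)
    (hG' : (∃ e : E, ‖e‖ = 1 ∧ G' = {x | 0 < inner ℝ e x}) ∨ G' = ball 0 1)
    {f : E → E} (hbij : BijOn f G G') (hconf : ∀ p ∈ G, ConformalAt f p)
    {x y : E} (hx : x ∈ G) (hy : y ∈ G) :
    dist (f x) (f y) / boundaryMaxDist G' (f x) (f y) ≤
      2 * (dist x y / boundaryMaxDist G x y) := by
  have : FiniteDimensional ℝ E := Module.finite_of_finrank_pos (by omega)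
  obtain ⟨δ, hδ, rfl⟩ := exists_isHyperbolicWeight hdim hG
  obtain ⟨δ', hδ', rfl⟩ := exists_isHyperbolicWeight hdim hG'
  calc dist (f x) (f y) / boundaryMaxDist {p | 0 < δ' p} (f x) (f y)
      ≤ 2 * tanhHalfDist δ' (f x) (f y) :=
        hδ'.dist_div_boundaryMaxDist_le (hbij.mapsTo hx) (hbij.mapsTo hy)
    _ ≤ 2 * tanhHalfDist δ x y := by
        gcongr
        exact hδ.tanhHalfDist_apply_le hdim hδ' ⟨hbij, hconf⟩ hx hy
    _ ≤ 2 * (dist x y / boundaryMaxDist {p | 0 < δ p} x y) := by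
        gcongr
        exact hδ.tanhHalfDist_le hx hy

lemma exists_upperHalfSpace_eq_setOf_inner_pos (n : ℕ) :
    ∃ e : EuclideanSpace ℝ (Fin (n + 2)), ‖e‖ = 1 ∧ upperHalfSpace n = {x | 0 < inner ℝ e x} := by
  refine ⟨EuclideanSpace.single (Fin.last (n + 1)) 1, by simp, ?_⟩
  ext x
  simp [upperHalfSpace, EuclideanSpace.inner_single_left]

/-- If `G, G′ ∈ {ℍⁿ, 𝔹ⁿ}` and `f : G → G′` is a bijection of `G` onto `G′` that is
conformal at every point of `G`, then `c̃_{G′}(f(x), f(y)) ≤ 2·c̃_G(x, y)` for all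
`x, y ∈ G`. -/
theorem stmt_16 {n : ℕ} (G G' : Set (EuclideanSpace ℝ (Fin (n + 2))))
    (hG : G = upperHalfSpace n ∨ G = ball (0 : EuclideanSpace ℝ (Fin (n + 2))) 1)
    (hG' : G' = upperHalfSpace n ∨ G' = ball (0 : EuclideanSpace ℝ (Fin (n + 2))) 1)
    (f : EuclideanSpace ℝ (Fin (n + 2)) → EuclideanSpace ℝ (Fin (n + 2)))
    (hbij : BijOn f G G') (hconf : ∀ p ∈ G, ConformalAt f p)
    (x y : EuclideanSpace ℝ (Fin (n + 2))) (hx : x ∈ G) (hy : y ∈ G) :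
    ctilde G' (f x) (f y) ≤ 2 * ctilde G x y := by
  have hhalf := exists_upperHalfSpace_eq_setOf_inner_pos n
  exact stmt_16_general (by simp) (hG.imp_left (· ▸ hhalf)) (hG'.imp_left (· ▸ hhalf)) hbij hconf
    hx hy
end
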